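/- Let K belong to the class R and let u be a non-singular vertex of K. If lk(u,K) contains the boundary complex of a 2-simplex abc as a subcomplex, then lk(u,K) contains the 2-simplex abc as well. Consequently, for any vertex v ∈ lk(u,K), the disc lk(u,K) − st(v, lk(u,K)) contains no diagonal, i.e., no interior edge connecting two of its boundary vertices. -/

import Mathlib

/-- An abstract simplicial complex on vertex set `ℕ`: a finite, downward closed
collection of nonempty finite sets of vertices. -/
structure SComplex where
  faces : Finset (Finset ℕ)
  not_empty_mem : ∅ ∉ faces
  down_closed : ∀ s ∈ faces, ∀ t ⊆ s, t ≠ ∅ → t ∈ faces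

namespace SComplex

/-- The set of vertices of the complex. -/
def vertexSet (K : SComplex) : Finset ℕ := K.faces.sup id

/-- `fnum K i` is the number of `i`-dimensional faces of `K`. -/
def fnum (K : SComplex) (i : ℕ) : ℕ := (K.faces.filter fun s => s.card = i + 1).card

/-- `g₂` for a 3-dimensional complex: `f₁ - 4 f₀ + 10`. -/
def g2 (K : SComplex) : ℤ := (K.fnum 1 : ℤ) - 4 * (K.fnum 0 : ℤ) + 10

/-- `g₂` for a 2-dimensional complex: `f₁ - 3 f₀ + 6`. -/
def g2surf (K : SComplex) : ℤ := (K.fnum 1 : ℤ) - 3 * (K.fnum 0 : ℤ) + 6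

/-- Euler characteristic of a (2-dimensional) complex. -/
def euler (K : SComplex) : ℤ := (K.fnum 0 : ℤ) - (K.fnum 1 : ℤ) + (K.fnum 2 : ℤ)

/-- The link of a face `σ`. -/
def lk (K : SComplex) (σ : Finset ℕ) : SComplex where
  faces := K.faces.filter fun γ => γ ∩ σ = ∅ ∧ γ ∪ σ ∈ K.faces
  not_empty_mem := fun h => K.not_empty_mem (Finset.mem_filter.mp h).1
  down_closed := by
    intro s hs t hts ht
    rw [Finset.mem_filter] at hs ⊢
    refine ⟨K.down_closed s hs.1 t hts ht, ?_, ?_⟩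
    · have h1 : t ∩ σ ⊆ s ∩ σ := Finset.inter_subset_inter hts (Finset.Subset.refl σ)
      rw [hs.2.1] at h1
      exact Finset.subset_empty.mp h1
    · refine K.down_closed (s ∪ σ) hs.2.2 (t ∪ σ)
        (Finset.union_subset_union hts (Finset.Subset.refl σ)) ?_
      intro hc
      exact ht (Finset.union_eq_empty.mp hc).1

/-- The (closed) star of a face `σ`. -/
def st (K : SComplex) (σ : Finset ℕ) : SComplex where
  faces := K.faces.filter fun α => α ∪ σ ∈ K.faces
  not_empty_mem := fun h => K.not_empty_mem (Finset.mem_filter.mp h).1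
  down_closed := by
    intro s hs t hts ht
    rw [Finset.mem_filter] at hs ⊢
    refine ⟨K.down_closed s hs.1 t hts ht, ?_⟩
    refine K.down_closed (s ∪ σ) hs.2 (t ∪ σ)
      (Finset.union_subset_union hts (Finset.Subset.refl σ)) ?_
    intro hc
    exact ht (Finset.union_eq_empty.mp hc).1

/-- A facet is a maximal face. -/
def IsFacet (K : SComplex) (s : Finset ℕ) : Prop :=
  s ∈ K.faces ∧ ∀ t ∈ K.faces, s ⊆ t → s = t

/-- A pure `d`-dimensional complex: all facets have `d+1` vertices. -/
def IsPure (K : SComplex) (d : ℕ) : Prop :=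
  K.faces.Nonempty ∧ ∀ s, K.IsFacet s → s.card = d + 1

/-- Two facets are adjacent if they share a codimension-one face. -/
def FacetAdj (K : SComplex) (s t : Finset ℕ) : Prop :=
  K.IsFacet s ∧ K.IsFacet t ∧ (s ∩ t).card + 1 = s.card

/-- Strong connectedness: any two facets are joined by a chain of facets, consecutive
ones sharing a codimension-one face. -/
def StronglyConnected (K : SComplex) : Prop :=
  ∀ s t, K.IsFacet s → K.IsFacet t → Relation.ReflTransGen K.FacetAdj s t

/-- Two vertices are adjacent if they span an edge. -/
def VertAdj (K : SComplex) (u v : ℕ) : Prop := ({u, v} : Finset ℕ) ∈ K.faces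

/-- Connectedness of a complex (via its 1-skeleton). -/
def Conn (K : SComplex) : Prop :=
  K.faces.Nonempty ∧
    ∀ u v, {u} ∈ K.faces → {v} ∈ K.faces → Relation.ReflTransGen K.VertAdj u v

/-- A normal `d`-pseudomanifold: pure, strongly connected, every `(d-1)`-face is in
exactly two facets, and links of faces of dimension at most `d-2` are connected. -/
def IsNormalPseudomanifold (K : SComplex) (d : ℕ) : Prop :=
  K.IsPure d ∧ K.StronglyConnected ∧
    (∀ s ∈ K.faces, s.card = d →
      (K.faces.filter fun F => F.card = d + 1 ∧ s ⊆ F).card = 2) ∧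
    (∀ s ∈ K.faces, s.card ≤ d - 1 → (K.lk s).Conn)

/-- The geometric realization `|K|`, as a subspace of `ℕ → ℝ`. -/
def realSpace (K : SComplex) : Set (ℕ → ℝ) :=
  {w | (∀ v, 0 ≤ w v) ∧ ∃ s ∈ K.faces, (∀ v, w v ≠ 0 → v ∈ s) ∧ ∑ v ∈ s, w v = 1}

/-- The link of the vertex `v` triangulates the `(d-1)`-sphere. -/
def HasSphereLink (K : SComplex) (d : ℕ) (v : ℕ) : Prop :=
  Nonempty (↥((K.lk {v}).realSpace) ≃ₜ
    ↥(Metric.sphere (0 : EuclideanSpace ℝ (Fin d)) 1))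

/-- A singular vertex of a normal 3-pseudomanifold: its link is not a 2-sphere. -/
def IsSingular (K : SComplex) (v : ℕ) : Prop :=
  {v} ∈ K.faces ∧ ¬ K.HasSphereLink 3 v

/-- `d(σ)`: the number of vertices of the link of `σ`. -/
def deg (K : SComplex) (σ : Finset ℕ) : ℕ := (K.lk σ).fnum 0

/-- The boundary complex of the simplex on vertex set `s`: all nonempty proper subsets. -/
def properFaces (s : Finset ℕ) : Finset (Finset ℕ) :=
  s.powerset.filter fun t => t ≠ ∅ ∧ t ≠ s

/-- All nonempty faces of the simplex on vertex set `s`. -/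
def simplexFaces (s : Finset ℕ) : Finset (Finset ℕ) :=
  s.powerset.filter fun t => t ≠ ∅

/-- Operation (A): a bistellar 2-move on an edge `uv` with `lk(uv) = ∂(abc)`, `abc ∉ K`. -/
def BistellarTwoMove (K K' : SComplex) : Prop :=
  ∃ u v a b c : ℕ,
    ({u, v} : Finset ℕ) ∈ K.faces ∧ u ≠ v ∧
    ({a, b, c} : Finset ℕ).card = 3 ∧
    u ∉ ({a, b, c} : Finset ℕ) ∧ v ∉ ({a, b, c} : Finset ℕ) ∧
    (K.lk {u, v}).faces = properFaces {a, b, c} ∧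
    ({a, b, c} : Finset ℕ) ∉ K.faces ∧
    K'.faces = ((K.faces.filter fun α => ¬ ({u, v} : Finset ℕ) ⊆ α) ∪
      simplexFaces (insert u {a, b, c})) ∪ simplexFaces (insert v {a, b, c})

/-- The faces of the boundary complex of a pure `d`-dimensional complex with face set `F`:
faces contained in some `(d-1)`-face lying in exactly one facet. -/
def bdryFaces (F : Finset (Finset ℕ)) (d : ℕ) : Finset (Finset ℕ) :=
  F.filter fun s => ∃ r ∈ F, s ⊆ r ∧ r.card = d ∧
    (F.filter fun t => t.card = d + 1 ∧ r ⊆ t).card = 1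

/-- The faces of the cone with apex `w` over the complex with face set `F`. -/
def coneFaces (w : ℕ) (F : Finset (Finset ℕ)) : Finset (Finset ℕ) :=
  (F ∪ F.image (insert w)) ∪ {{w}}

/-- `K₁` is obtained from the normal `d`-pseudomanifold `K` by contracting the
edge `uv` (satisfying the link condition): delete all faces containing `u` or `v`
and cone off the boundary of the result with a new vertex `w`. -/
def EdgeContractionAt (d : ℕ) (K : SComplex) (u v : ℕ) (K₁ : SComplex) : Prop :=
  ({u, v} : Finset ℕ) ∈ K.faces ∧ u ≠ v ∧
  (K.lk {u}).faces ∩ (K.lk {v}).faces = (K.lk {u, v}).faces ∧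
  ∃ w, w ∉ K.vertexSet ∧
    K₁.faces = (K.faces.filter fun α => u ∉ α ∧ v ∉ α) ∪
      coneFaces w (bdryFaces (K.faces.filter fun α => u ∉ α ∧ v ∉ α) d)

/-- Operation (B): an edge contraction in a 3-dimensional complex. -/
def EdgeContraction (K K₁ : SComplex) : Prop := ∃ u v, EdgeContractionAt 3 K u v K₁

/-- The class `R`: normal 3-pseudomanifolds with one or two singular vertices such that
(i) if `K` contains the boundary of a 3-simplex then it contains the 3-simplex and
(ii) no normal 3-pseudomanifold with smaller `g₂` is obtained from `K` by a
bistellar 2-move, an edge contraction, an edge expansion followed by a bistellar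
2-move, or an edge expansion followed by an edge contraction. -/
def InClassR (K : SComplex) : Prop :=
  K.IsNormalPseudomanifold 3 ∧
  1 ≤ {v | K.IsSingular v}.ncard ∧ {v | K.IsSingular v}.ncard ≤ 2 ∧
  (∀ s : Finset ℕ, s.card = 4 → (∀ t ∈ properFaces s, t ∈ K.faces) → s ∈ K.faces) ∧
  (∀ K' : SComplex, K'.IsNormalPseudomanifold 3 →
    (BistellarTwoMove K K' ∨ EdgeContraction K K' ∨
      (∃ M, EdgeContraction M K ∧ BistellarTwoMove M K') ∨
      (∃ M, EdgeContraction M K ∧ EdgeContraction M K')) →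
    K.g2 ≤ K'.g2)

end SComplex

/-!
Suppose that `Q = {a, b, c}` is missing in `lk(u)` although `∂Q` lies in `lk(u)`. Then `Q` is not a
face of `K`, since otherwise condition (i) would make `{u, a, b, c}` a face. By a Čech argument,
covering the sphere by two hemispheres with connected intersection, every simplicial 1-cocycle on
`lk(u)` is a coboundary; dually, `∂Q` is the boundary mod 2 of a set of triangles of `lk(u)`. This
set and its complement are the two sides of `∂Q`, and two triangles with a common edge `e` lie on
the same side if and only if `e` is not an edge of `Q`. Expanding `u` into an edge `xy` with link
`∂Q`, where `x` and `y` are coned over the two sides, and replacing this edge by the triangle `Q` in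
a bistellar 2-move gives a normal 3-pseudomanifold whose `g₂` is smaller by one, against condition
(ii). A diagonal `xy` of the disc `lk(u) − st(v, lk(u))` would yield the missing triangle `vxy`.
-/

section CechTrivial

open Set

variable {ι Y Z G : Type*} [TopologicalSpace Y] [TopologicalSpace Z] [AddCommGroup G]
  [TopologicalSpace G]

/-- `ε` is a Čech 1-cocycle with constant coefficients `G` for the family of sets `U`. -/
def IsCechCocycle (U : ι → Set Y) (ε : ι → ι → G) : Prop :=
  ∀ i j k, (U i ∩ U j ∩ U k).Nonempty → ε i j + ε j k = ε i k

/-- The functions `φ i`, locally constant on `A ∩ U i` when `G` is discrete, exhibit `ε` as a Čech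
coboundary over the subset `A`. -/
structure IsCechTrivialization (U : ι → Set Y) (ε : ι → ι → G) (A : Set Y) (φ : ι → Y → G) :
    Prop where
  continuousOn : ∀ i, ContinuousOn (φ i) (A ∩ U i)
  eq_add : ∀ i j x, x ∈ A → x ∈ U i → x ∈ U j → φ i x = φ j x + ε i j

/-- `ε` becomes a Čech coboundary when restricted to the subset `A`. -/
def CechTrivial (U : ι → Set Y) (ε : ι → ι → G) (A : Set Y) : Prop :=
  ∃ φ, IsCechTrivialization U ε A φ

variable {U : ι → Set Y} {ε : ι → ι → G} {A B : Set Y} {φ ψ : ι → Y → G}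

lemma IsCechTrivialization.mono (hφ : IsCechTrivialization U ε B φ) (hAB : A ⊆ B) :
    IsCechTrivialization U ε A φ where
  continuousOn i := (hφ.continuousOn i).mono (inter_subset_inter_left _ hAB)
  eq_add i j x hx := hφ.eq_add i j x (hAB hx)

lemma CechTrivial.mono (hB : CechTrivial U ε B) (hAB : A ⊆ B) : CechTrivial U ε A :=
  hB.imp fun _ hφ => hφ.mono hAB

lemma CechTrivial.of_subset (hε : IsCechCocycle U ε) {i : ι} (hA : A ⊆ U i) :
    CechTrivial U ε A := by
  refine ⟨fun j _ => -ε i j, fun _ => continuousOn_const, fun j k x hx hj hk => ?_⟩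
  rw [← hε i j k ⟨x, ⟨hA hx, hj⟩, hk⟩]
  abel

lemma CechTrivial.of_rightInvOn {f : Z → Y} {g : Y → Z} {C : Set Z}
    (h : CechTrivial (fun i => f ⁻¹' U i) ε C) (hg : ContinuousOn g A) (hgC : MapsTo g A C)
    (hfg : LeftInvOn f g A) : CechTrivial U ε A := by
  obtain ⟨φ, hφ⟩ := h
  have hgU {i x} (hx : x ∈ A) (hi : x ∈ U i) : g x ∈ f ⁻¹' U i := by
    rwa [mem_preimage, hfg hx]
  exact ⟨fun i => φ i ∘ g,
    fun i => (hφ.continuousOn i).comp (hg.mono inter_subset_left)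
      fun x hx => ⟨hgC hx.1, hgU hx.1 hx.2⟩,
    fun i j x hx hi hj => hφ.eq_add i j _ (hgC hx) (hgU hx hi) (hgU hx hj)⟩

variable [DiscreteTopology G]

lemma IsCechTrivialization.exists_eq_add_const (hU : ∀ i, IsOpen (U i)) (hcov : ∀ x, ∃ i, x ∈ U i)
    (hφ : IsCechTrivialization U ε A φ) (hψ : IsCechTrivialization U ε A ψ)
    (hA : IsPreconnected A) : ∃ δ : G, ∀ x ∈ A, ∀ i, x ∈ U i → φ i x = ψ i x + δ := by
  choose I hI using hcov
  have hdiff : ∀ x ∈ A, ∀ i, x ∈ U i → φ (I x) x - ψ (I x) x = φ i x - ψ i x := by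
    intro x hx i hi
    rw [hφ.eq_add (I x) i x hx (hI x) hi, hψ.eq_add (I x) i x hx (hI x) hi]
    abel
  have hcont : ContinuousOn (fun x => φ (I x) x - ψ (I x) x) A := by
    intro x hx
    have hlocal : ContinuousWithinAt (fun y => φ (I x) y - ψ (I x) y) (A ∩ U (I x)) x :=
      (hφ.continuousOn _ x ⟨hx, hI x⟩).sub (hψ.continuousOn _ x ⟨hx, hI x⟩)
    exact (hlocal.congr (fun y hy => hdiff y hy.1 _ hy.2) rfl).mono_of_mem_nhdsWithin
      (inter_mem_nhdsWithin A ((hU _).mem_nhds (hI x)))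
  rcases A.eq_empty_or_nonempty with rfl | ⟨x₀, hx₀⟩
  · exact ⟨0, by simp⟩
  refine ⟨φ (I x₀) x₀ - ψ (I x₀) x₀, fun x hx i hi => ?_⟩
  rw [← hA.constant hcont hx hx₀, hdiff x hx i hi, add_sub_cancel]

/- Over the connected overlap two trivializations differ by a constant, which is absorbed into one
of them before gluing. -/
lemma CechTrivial.union (hU : ∀ i, IsOpen (U i)) (hcov : ∀ x, ∃ i, x ∈ U i)
    (hA : CechTrivial U ε A) (hB : CechTrivial U ε B) (hAc : IsClosed A) (hBc : IsClosed B)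
    (hAB : IsPreconnected (A ∩ B)) : CechTrivial U ε (A ∪ B) := by
  classical
  obtain ⟨φ, hφ⟩ := hA
  obtain ⟨ψ, hψ⟩ := hB
  obtain ⟨δ, hδ⟩ := (hφ.mono inter_subset_left).exists_eq_add_const hU hcov
    (hψ.mono inter_subset_right) hAB
  let χ : ι → Y → G := fun i x => if x ∈ A then φ i x else ψ i x + δ
  have hχA : ∀ i, ∀ x ∈ A, χ i x = φ i x := fun i x hx => if_pos hx
  have hχB : ∀ i, ∀ x ∈ B, x ∈ U i → χ i x = ψ i x + δ := fun i x hx hi => by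
    by_cases hxA : x ∈ A
    · rw [hχA i x hxA, hδ x ⟨hxA, hx⟩ i hi]
    · exact if_neg hxA
  refine ⟨χ, fun i => ?_, fun i j x hx hi hj => ?_⟩
  · rw [union_inter_distrib_right]
    have hχAc : ContinuousOn (χ i) (A ∩ U i) :=
      (hφ.continuousOn i).congr fun x hx => hχA i x hx.1
    have hχBc : ContinuousOn (χ i) (B ∩ U i) :=
      ((hψ.continuousOn i).add continuousOn_const).congr fun x hx => hχB i x hx.1 hx.2
    intro x hx
    refine ContinuousWithinAt.union ?_ ?_
    · by_cases hxA : x ∈ A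
      · exact hχAc x ⟨hxA, hx.elim And.right And.right⟩
      · exact continuousWithinAt_of_notMem_closure fun h =>
          hxA (hAc.closure_subset_iff.2 inter_subset_left h)
    · by_cases hxB : x ∈ B
      · exact hχBc x ⟨hxB, hx.elim And.right And.right⟩
      · exact continuousWithinAt_of_notMem_closure fun h =>
          hxB (hBc.closure_subset_iff.2 inter_subset_left h)
  · rcases hx with hx | hx
    · rw [hχA i x hx, hχA j x hx, hφ.eq_add i j x hx hi hj]
    · rw [hχB i x hx hi, hχB j x hx hj, hψ.eq_add i j x hx hi hj, add_right_comm]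

end CechTrivial

section ConvexSets

open Set Metric

variable {ι G E κ : Type*} [AddCommGroup G] [TopologicalSpace G] [DiscreteTopology G]
  [NormedAddCommGroup E] [NormedSpace ℝ E] {ε : ι → ι → G}

lemma CechTrivial.of_slabs {U : ι → Set E} (hU : ∀ i, IsOpen (U i)) (hcov : ∀ x, ∃ i, x ∈ U i)
    {C : Set E} (hCc : IsCompact C) (hC : Convex ℝ C) (ℓ : E →L[ℝ] ℝ) {η : ℝ} (hη : 0 < η)
    (hslab : ∀ a, CechTrivial U ε (C ∩ ℓ ⁻¹' Icc a (a + η))) : CechTrivial U ε C := by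
  have hconvex (a b) : Convex ℝ (C ∩ ℓ ⁻¹' Icc a b) :=
    hC.inter ((convex_Icc a b).linear_preimage ℓ.toLinearMap)
  have hclosed (a b) : IsClosed (C ∩ ℓ ⁻¹' Icc a b) :=
    hCc.isClosed.inter (isClosed_Icc.preimage ℓ.continuous)
  have hstack (a : ℝ) (n : ℕ) : CechTrivial U ε (C ∩ ℓ ⁻¹' Icc a (a + (n * η + η))) := by
    induction n with
    | zero => simpa using hslab a
    | succ n ih =>
      have := ih.union hU hcov (hslab (a + (n * η + η))) (hclosed _ _) (hclosed _ _)
        ((hconvex _ _).inter (hconvex _ _)).isPreconnected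
      rw [← inter_union_distrib_left, ← preimage_union,
        Icc_union_Icc_eq_Icc (le_add_of_nonneg_right (by positivity))
          (le_add_of_nonneg_right hη.le)] at this
      rwa [show a + (n * η + η) + η = a + ((n + 1 : ℕ) * η + η) by push_cast; ring] at this
  obtain ⟨a, ha⟩ := hCc.bddBelow_image ℓ.continuous.continuousOn
  obtain ⟨b, hb⟩ := hCc.bddAbove_image ℓ.continuous.continuousOn
  obtain ⟨n, hn⟩ := exists_nat_ge ((b - a) / η)
  refine (hstack a n).mono fun x hx => ⟨hx, ha (mem_image_of_mem ℓ hx), ?_⟩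
  have := hb (mem_image_of_mem ℓ hx)
  rw [div_le_iff₀ hη] at hn
  linarith

lemma CechTrivial.of_small_subsets [Fintype κ] {U : ι → Set (κ → ℝ)} (hU : ∀ i, IsOpen (U i))
    (hcov : ∀ x, ∃ i, x ∈ U i) {η : ℝ} (hη : 0 < η) {C : Set (κ → ℝ)} (hCc : IsCompact C)
    (hC : Convex ℝ C) (hsmall : ∀ D ⊆ C, (∀ x ∈ D, ∀ y ∈ D, dist x y ≤ η) → CechTrivial U ε D) :
    CechTrivial U ε C := by
  classical
  suffices hwide : ∀ s : Finset κ, ∀ D ⊆ C, IsCompact D → Convex ℝ D →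
      (∀ k ∉ s, ∀ x ∈ D, ∀ y ∈ D, dist (x k) (y k) ≤ η) → CechTrivial U ε D from
    hwide Finset.univ C Subset.rfl hCc hC (by simp)
  intro s
  induction s using Finset.induction with
  | empty =>
    exact fun D hDC _ _ hD => hsmall D hDC fun x hx y hy =>
      (dist_pi_le_iff hη.le).2 fun k => hD k (by simp) x hx y hy
  | insert k s _ ih =>
    intro D hDC hDc hD hnarrow
    let ℓ : (κ → ℝ) →L[ℝ] ℝ := ContinuousLinearMap.proj k
    refine .of_slabs hU hcov hDc hD ℓ hη fun a => ih _ (inter_subset_left.trans hDC)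
      (hDc.inter_right (isClosed_Icc.preimage ℓ.continuous))
      (hD.inter ((convex_Icc _ _).linear_preimage ℓ.toLinearMap)) ?_
    intro m hm x hx y hy
    by_cases hmk : m = k
    · subst hmk
      exact (Real.dist_le_of_mem_Icc hx.2 hy.2).trans_eq (add_sub_cancel_left a η)
    · exact hnarrow m (by simp [hmk, hm]) x hx.1 y hy.1

lemma CechTrivial.of_isCompact_of_convex [Finite κ] {U : ι → Set (κ → ℝ)} (hU : ∀ i, IsOpen (U i))
    (hcov : ∀ x, ∃ i, x ∈ U i) (hε : IsCechCocycle U ε) {C : Set (κ → ℝ)} (hCc : IsCompact C)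
    (hC : Convex ℝ C) : CechTrivial U ε C := by
  cases nonempty_fintype κ
  obtain ⟨δ, hδ, hLebesgue⟩ := lebesgue_number_lemma_of_metric hCc hU
    (fun x _ => mem_iUnion.2 (hcov x))
  refine .of_small_subsets hU hcov (half_pos hδ) hCc hC fun D hDC hD => ?_
  obtain ⟨i, hi⟩ : ∃ i, D ⊆ U i := by
    rcases D.eq_empty_or_nonempty with rfl | ⟨x, hx⟩
    · exact (hcov 0).imp fun i _ => empty_subset _
    · exact (hLebesgue x (hDC hx)).imp fun i hi y hy =>
        hi ((hD y hy x hx).trans_lt (half_lt_self hδ))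
  exact .of_subset hε hi

lemma CechTrivial.of_isCompact [FiniteDimensional ℝ E] {U : ι → Set E} (hU : ∀ i, IsOpen (U i))
    (hcov : ∀ x, ∃ i, x ∈ U i) (hε : IsCechCocycle U ε) {C : Set E} (hCc : IsCompact C) :
    CechTrivial U ε C := by
  let e : E ≃L[ℝ] (Fin (Module.finrank ℝ E) → ℝ) :=
    ContinuousLinearEquiv.ofFinrankEq (by simp)
  obtain ⟨r, hr⟩ := (hCc.image e.continuous).isBounded.subset_closedBall 0
  have hball : CechTrivial (fun i => e.symm ⁻¹' U i) ε (closedBall 0 r) :=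
    .of_isCompact_of_convex (fun i => (hU i).preimage e.symm.continuous) (fun x => hcov _)
      (fun i j k ⟨x, hx⟩ => hε i j k ⟨_, hx⟩) (isCompact_closedBall 0 r) (convex_closedBall 0 r)
  exact hball.of_rightInvOn e.continuous.continuousOn (fun x hx => hr (mem_image_of_mem e hx))
    fun x _ => e.symm_apply_apply x

end ConvexSets

section Sphere

open Set Metric
open scoped RealInnerProductSpace

variable {ι G E : Type*} [AddCommGroup G] [TopologicalSpace G] [DiscreteTopology G]
  [NormedAddCommGroup E] [InnerProductSpace ℝ E]

/-- The closed hemisphere of the unit sphere opposite to the pole `v`. -/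
def oppositeHemisphere (v : E) : Set (sphere (0 : E) 1) := {x | ⟪v, x⟫ ≤ 0}

lemma isClosed_oppositeHemisphere (v : E) : IsClosed (oppositeHemisphere v) :=
  isClosed_le (by fun_prop) continuous_const

variable [FiniteDimensional ℝ E] {U : ι → Set (sphere (0 : E) 1)} {ε : ι → ι → G}

lemma cechTrivial_oppositeHemisphere (hU : ∀ i, IsOpen (U i)) (hcov : ∀ x, ∃ i, x ∈ U i)
    (hε : IsCechCocycle U ε) {v : E} (hv : ‖v‖ = 1) : CechTrivial U ε (oppositeHemisphere v) := by
  let σ := stereographic hv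
  have hσ : Continuous σ.symm := by
    simpa [σ, continuousOn_univ] using (stereographic hv).continuousOn_symm
  have hsource : oppositeHemisphere v ⊆ σ.source := by
    rw [stereographic_source, subset_compl_singleton_iff]
    simp [oppositeHemisphere, hv]
  have hcont : ContinuousOn σ (oppositeHemisphere v) := σ.continuousOn.mono hsource
  have hplane : CechTrivial (fun i => σ.symm ⁻¹' U i) ε (σ '' oppositeHemisphere v) :=
    .of_isCompact (fun i => (hU i).preimage hσ) (fun x => hcov _)
      (fun i j k ⟨x, hx⟩ => hε i j k ⟨_, hx⟩)
      ((isClosed_oppositeHemisphere v).isCompact.image_of_continuousOn hcont)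
  exact hplane.of_rightInvOn hcont (mapsTo_image _ _) fun x hx => σ.left_inv (hsource hx)

lemma isPreconnected_equator (hE : 2 < Module.finrank ℝ E) {v : E} (hv : v ≠ 0) :
    IsPreconnected (oppositeHemisphere v ∩ oppositeHemisphere (-v)) := by
  have hrank : 1 < Module.rank ℝ (ℝ ∙ v)ᗮ := by
    have := Submodule.finrank_add_finrank_orthogonal (ℝ ∙ v)
    rw [finrank_span_singleton hv] at this
    rw [← Module.finrank_eq_rank]
    exact_mod_cast (by omega : 1 < Module.finrank ℝ (ℝ ∙ v)ᗮ)
  let inclusion : sphere (0 : (ℝ ∙ v)ᗮ) 1 → sphere (0 : E) 1 :=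
    fun w => ⟨w, mem_sphere_zero_iff_norm.2 (norm_eq_of_mem_sphere w)⟩
  have := isPreconnected_iff_preconnectedSpace.1 (isPreconnected_sphere hrank 0 1)
  convert isPreconnected_range (f := inclusion) (by fun_prop)
  ext x
  simp only [oppositeHemisphere, inner_neg_left, mem_inter_iff, mem_ofPred_eq, neg_nonpos,
    mem_range]
  constructor
  · rintro ⟨h₁, h₂⟩
    have hx : (x : E) ∈ (ℝ ∙ v)ᗮ := Submodule.mem_orthogonal_singleton_iff_inner_right.2
      (le_antisymm h₁ h₂)
    exact ⟨⟨⟨x, hx⟩, mem_sphere_zero_iff_norm.2 (norm_eq_of_mem_sphere x)⟩, rfl⟩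
  · rintro ⟨w, rfl⟩
    exact ⟨(Submodule.mem_orthogonal_singleton_iff_inner_right.1 w.1.2).le,
      (Submodule.mem_orthogonal_singleton_iff_inner_right.1 w.1.2).ge⟩

lemma cechTrivial_univ_sphere (hE : 2 < Module.finrank ℝ E)
    (hU : ∀ i, IsOpen (U i)) (hcov : ∀ x, ∃ i, x ∈ U i) (hε : IsCechCocycle U ε) :
    CechTrivial U ε univ := by
  have : Nontrivial E := Module.nontrivial_of_finrank_pos (R := ℝ) (by omega)
  obtain ⟨v, hv⟩ := exists_norm_eq E zero_le_one
  have hunion := (cechTrivial_oppositeHemisphere hU hcov hε hv).union hU hcov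
    (cechTrivial_oppositeHemisphere hU hcov hε (v := -v) (by rwa [norm_neg]))
    (isClosed_oppositeHemisphere v) (isClosed_oppositeHemisphere (-v))
    (isPreconnected_equator hE (norm_ne_zero_iff.1 (by simp [hv])))
  refine hunion.mono fun x _ => ?_
  simp only [oppositeHemisphere, inner_neg_left, neg_nonpos]
  exact le_total ⟪v, (x : E)⟫ 0

end Sphere

namespace SComplex

section Homology

variable {L : SComplex} {G : Type*} [AddCommGroup G]

/-- Vanishing of the first simplicial cohomology group of `L` with coefficients in `G`: every
1-cocycle is a coboundary. Taking `i = j = k` in the cocycle condition gives `ε i i = 0`, and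
taking `i = k` gives `ε j i = -ε i j`. -/
def HasTrivialH1 (L : SComplex) (G : Type*) [AddCommGroup G] : Prop :=
  ∀ ε : ℕ → ℕ → G, (∀ i j k, ({i, j, k} : Finset ℕ) ∈ L.faces → ε i j + ε j k = ε i k) →
    ∃ ψ : ℕ → G, ∀ i j, ({i, j} : Finset ℕ) ∈ L.faces → ψ i = ψ j + ε i j

/-- The open star of the vertex `v` in the geometric realization of `L`. -/
def openStar (L : SComplex) (v : ℕ) : Set L.realSpace := {w | w.1 v ≠ 0}

lemma isOpen_openStar (v : ℕ) : IsOpen (L.openStar v) :=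
  isOpen_ne_fun ((continuous_apply v).comp continuous_subtype_val) continuous_const

lemma exists_mem_openStar (w : L.realSpace) : ∃ v, w ∈ L.openStar v := by
  by_contra! hzero
  obtain ⟨-, s, -, -, hsum⟩ := w.2
  exact zero_ne_one ((Finset.sum_eq_zero fun v _ => not_not.1 (hzero v)).symm.trans hsum)

lemma mem_faces_of_forall_mem_openStar {w : L.realSpace} {s : Finset ℕ} (hs : s ≠ ∅)
    (hw : ∀ v ∈ s, w ∈ L.openStar v) : s ∈ L.faces := by
  obtain ⟨-, t, ht, hsupp, -⟩ := w.2
  exact L.down_closed t ht s (fun v hv => hsupp v (hw v hv)) hs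

lemma single_mem_realSpace {v : ℕ} (hv : {v} ∈ L.faces) : Pi.single v 1 ∈ L.realSpace := by
  have hnonneg : (0 : ℕ → ℝ) ≤ Pi.single v 1 := Pi.single_nonneg.2 zero_le_one
  refine ⟨hnonneg, {v}, hv, fun i hi => ?_, by simp⟩
  by_contra hiv
  exact hi (Pi.single_eq_of_ne (by simpa using hiv) _)

lemma combination_single_mem_realSpace {v : ℕ} {w : ℕ → ℝ} (hw : w ∈ L.realSpace) (hwv : w v ≠ 0)
    {p q : ℝ} (hp : 0 ≤ p) (hq : 0 ≤ q) (hpq : p + q = 1) :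
    p • Pi.single v 1 + q • w ∈ L.realSpace := by
  obtain ⟨hnonneg, s, hs, hsupp, hsum⟩ := hw
  have hsingle : (0 : ℕ → ℝ) ≤ Pi.single v 1 := Pi.single_nonneg.2 zero_le_one
  refine ⟨fun i => add_nonneg (mul_nonneg hp (hsingle i)) (mul_nonneg hq (hnonneg i)), s, hs,
    fun i hi => ?_, ?_⟩
  · by_contra his
    have hwi : w i = 0 := not_not.1 (mt (hsupp i) his)
    have hiv : i ≠ v := fun h => his (h ▸ hsupp v hwv)
    simp [hwi, hiv] at hi
  · simp only [Pi.add_apply, Pi.smul_apply, smul_eq_mul, Finset.sum_add_distrib,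
      ← Finset.mul_sum, hsum, Finset.sum_pi_single', hsupp v hwv, if_true, mul_one, hpq]

lemma isPreconnected_openStar (v : ℕ) : IsPreconnected (L.openStar v) := by
  rw [← Topology.IsInducing.subtypeVal.isPreconnected_image]
  rcases (L.openStar v).eq_empty_or_nonempty with hempty | ⟨w₀, hw₀⟩
  · rw [hempty, Set.image_empty]
    exact isPreconnected_empty
  have hv : {v} ∈ L.faces :=
    mem_faces_of_forall_mem_openStar (Finset.singleton_ne_empty v) (by simpa using hw₀)
  have hcenter : Pi.single v 1 ∈ Subtype.val '' L.openStar v :=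
    ⟨⟨_, single_mem_realSpace hv⟩, by simp [openStar], rfl⟩
  refine (StarConvex.isPathConnected ?_ hcenter).isConnected.isPreconnected
  rintro _ ⟨⟨w, hw⟩, hwv, rfl⟩ p q hp hq hpq
  refine ⟨⟨_, combination_single_mem_realSpace hw hwv hp hq hpq⟩, ?_, rfl⟩
  have hpos : 0 < w v := (hw.1 v).lt_of_ne' hwv
  simp only [openStar, Set.mem_ofPred_eq, Pi.add_apply, Pi.smul_apply, smul_eq_mul,
    Pi.single_eq_same, mul_one]
  nlinarith [mul_nonneg hq hpos.le]

lemma exists_mem_openStar_inter_openStar {i j : ℕ} (hij : i ≠ j)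
    (he : ({i, j} : Finset ℕ) ∈ L.faces) : (L.openStar i ∩ L.openStar j).Nonempty := by
  have hi : {i} ∈ L.faces := L.down_closed _ he _ (by simp) (by simp)
  have hmid : ∀ k, k = i ∨ k = j → ((1 / 2 : ℝ) • Pi.single i 1 + (1 / 2 : ℝ) • Pi.single j 1 :
      ℕ → ℝ) k = 1 / 2 := by
    rintro k (rfl | rfl) <;> simp [hij, hij.symm]
  refine ⟨⟨(1 / 2 : ℝ) • Pi.single i 1 + (1 / 2 : ℝ) • Pi.single j 1, fun k => ?_, {i, j}, he,
    fun k hk => ?_, ?_⟩, ?_, ?_⟩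
  · have hnonneg (l : ℕ) : (0 : ℕ → ℝ) ≤ Pi.single l 1 := Pi.single_nonneg.2 zero_le_one
    exact add_nonneg (mul_nonneg (by norm_num) (hnonneg i k))
      (mul_nonneg (by norm_num) (hnonneg j k))
  · by_contra hkij
    simp only [Finset.mem_insert, Finset.mem_singleton, not_or] at hkij
    simp [hkij] at hk
  · rw [Finset.sum_pair hij, hmid i (.inl rfl), hmid j (.inr rfl)]
    norm_num
  · simp only [openStar, Set.mem_ofPred_eq, hmid i (.inl rfl)]
    norm_num
  · simp only [openStar, Set.mem_ofPred_eq, hmid j (.inr rfl)]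
    norm_num

variable [TopologicalSpace G] [DiscreteTopology G]

/- A trivialization is constant on each open star, open stars being connected; these constants are
the values of the simplicial primitive. -/
lemma hasTrivialH1_of_cechTrivial
    (h : ∀ ε : ℕ → ℕ → G, IsCechCocycle L.openStar ε → CechTrivial L.openStar ε Set.univ) :
    L.HasTrivialH1 G := by
  intro ε hε
  obtain ⟨φ, hφ⟩ := h ε fun i j k ⟨w, ⟨hi, hj⟩, hk⟩ =>
    hε i j k (mem_faces_of_forall_mem_openStar (w := w) (by simp) (by simp [hi, hj, hk]))
  have hconst (v : ℕ) : ∃ ψ : G, ∀ w ∈ L.openStar v, φ v w = ψ := by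
    rcases (L.openStar v).eq_empty_or_nonempty with hempty | ⟨w₀, hw₀⟩
    · exact ⟨0, by simp [hempty]⟩
    · exact ⟨φ v w₀, fun w hw => (isPreconnected_openStar v).constant
        (by simpa using hφ.continuousOn v) hw hw₀⟩
  choose ψ hψ using hconst
  refine ⟨ψ, fun i j hij => ?_⟩
  rcases eq_or_ne i j with rfl | hne
  · simpa using hε i i i (by simpa using hij)
  · obtain ⟨w, hi, hj⟩ := exists_mem_openStar_inter_openStar hne hij
    rw [← hψ i w hi, ← hψ j w hj]
    exact hφ.eq_add i j w trivial hi hj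

lemma HasSphereLink.hasTrivialH1 {K : SComplex} {d v : ℕ} (hv : K.HasSphereLink d v) (hd : 2 < d) :
    (K.lk {v}).HasTrivialH1 G := by
  obtain ⟨h⟩ := hv
  refine hasTrivialH1_of_cechTrivial fun ε hε => ?_
  have hsphere : CechTrivial (fun i => h.symm ⁻¹' (K.lk {v}).openStar i) ε Set.univ :=
    cechTrivial_univ_sphere (by simpa using hd)
      (fun i => (isOpen_openStar i).preimage h.symm.continuous)
      (fun x => exists_mem_openStar (h.symm x)) (fun i j k ⟨x, hx⟩ => hε i j k ⟨_, hx⟩)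
  exact hsphere.of_rightInvOn h.continuous.continuousOn (Set.mapsTo_univ _ _)
    fun w _ => h.symm_apply_apply w

end Homology

section BoundaryChains

variable {L : SComplex} {Q : Finset ℕ}

/-- The mod 2 simplicial boundary of the triangle `t`, as a 1-chain. -/
noncomputable def triangleBoundary (t : Finset ℕ) : Finset ℕ → ZMod 2 :=
  ∑ e ∈ t.powersetCard 2, Pi.single e 1

lemma triangleBoundary_apply (t e : Finset ℕ) :
    triangleBoundary t e = if e ⊆ t ∧ e.card = 2 then 1 else 0 := by
  simp [triangleBoundary, Finset.sum_apply, Pi.single_apply, Finset.mem_powersetCard]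

lemma sum_powersetCard_two_triple {M : Type*} [AddCommMonoid M] {i j k : ℕ} (hij : i ≠ j)
    (hjk : j ≠ k) (hik : i ≠ k) (f : Finset ℕ → M) :
    ∑ e ∈ ({i, j, k} : Finset ℕ).powersetCard 2, f e = f {i, j} + f {j, k} + f {i, k} := by
  have hij_jk : ({i, j} : Finset ℕ) ≠ {j, k} :=
    ne_of_mem_of_not_mem' (a := i) (by simp) (by simp [hij, hik])
  have hij_ik : ({i, j} : Finset ℕ) ≠ {i, k} :=
    ne_of_mem_of_not_mem' (a := j) (by simp) (by simp [hij.symm, hjk])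
  have hjk_ik : ({j, k} : Finset ℕ) ≠ {i, k} :=
    ne_of_mem_of_not_mem' (a := j) (by simp) (by simp [hij.symm, hjk])
  have hpairs : ({i, j, k} : Finset ℕ).powersetCard 2 = {{i, j}, {j, k}, {i, k}} := by
    refine (Finset.eq_of_subset_of_card_le (by grind) ?_).symm
    rw [Finset.card_powersetCard, Finset.card_eq_three.2 ⟨i, j, k, hij, hik, hjk, rfl⟩]
    exact (Finset.card_eq_three.2 ⟨_, _, _, hij_jk, hij_ik, hjk_ik, rfl⟩).ge
  rw [hpairs, Finset.sum_insert (by simp [hij_jk, hij_ik]), Finset.sum_pair hjk_ik, add_assoc]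

/- If `∂Q` were not a sum of boundaries of triangles of `L`, some linear functional on 1-chains
would vanish on the latter but not on `∂Q`; such a functional is a cocycle, hence a coboundary, and
a coboundary vanishes on the cycle `∂Q`. -/
lemma HasTrivialH1.triangleBoundary_mem_span (hL : L.HasTrivialH1 (ZMod 2)) (hQ : Q.card = 3)
    (hedges : ∀ e ∈ Q.powersetCard 2, e ∈ L.faces) :
    triangleBoundary Q ∈ Submodule.span (ZMod 2)
      (triangleBoundary '' {t ∈ L.faces | t.card = 3}) := by
  by_contra hspan
  obtain ⟨f, hf, hker⟩ := Submodule.exists_le_ker_of_notMem hspan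
  let ε : ℕ → ℕ → ZMod 2 := fun i j => if i = j then 0 else f (Pi.single {i, j} 1)
  have hf_boundary {i j k} (hij : i ≠ j) (hjk : j ≠ k) (hik : i ≠ k) :
      f (triangleBoundary {i, j, k}) = ε i j + ε j k + ε i k := by
    rw [triangleBoundary, map_sum, sum_powersetCard_two_triple hij hjk hik]
    simp only [ε, hij, hjk, hik, if_false]
  have hε (i j k) (hijk : ({i, j, k} : Finset ℕ) ∈ L.faces) : ε i j + ε j k = ε i k := by
    by_cases hij : i = j
    · simp [ε, hij]
    by_cases hjk : j = k
    · simp [ε, hjk]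
    by_cases hik : i = k
    · subst hik
      simp [ε, hij, hjk, Finset.pair_comm j i, CharTwo.add_self_eq_zero]
    have hcycle : triangleBoundary {i, j, k} ∈ LinearMap.ker f :=
      hker (Submodule.subset_span
        ⟨_, ⟨hijk, Finset.card_eq_three.2 ⟨i, j, k, hij, hik, hjk, rfl⟩⟩, rfl⟩)
    rw [LinearMap.mem_ker, hf_boundary hij hjk hik] at hcycle
    exact CharTwo.add_eq_zero.1 hcycle
  obtain ⟨ψ, hψ⟩ := hL ε hε
  obtain ⟨a, b, c, hab, hac, hbc, rfl⟩ := Finset.card_eq_three.1 hQ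
  have hedge {i j} (hij : i ≠ j) (hi : i ∈ ({a, b, c} : Finset ℕ))
      (hj : j ∈ ({a, b, c} : Finset ℕ)) : ψ i = ψ j + ε i j :=
    hψ i j (hedges _ (Finset.mem_powersetCard.2
      ⟨Finset.insert_subset hi (Finset.singleton_subset_iff.2 hj), Finset.card_pair hij⟩))
  apply hf
  rw [hf_boundary hab hbc hac]
  have h₁ := hedge hab (by simp) (by simp)
  have h₂ := hedge hbc (by simp) (by simp)
  have h₃ := hedge hac (by simp) (by simp)
  grind

lemma HasTrivialH1.exists_sum_eq (hL : L.HasTrivialH1 (ZMod 2)) (hQ : Q.card = 3)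
    (hedges : ∀ e ∈ Q.powersetCard 2, e ∈ L.faces) :
    ∃ c : Finset ℕ → ZMod 2, ∀ e : Finset ℕ, e.card = 2 →
      ∑ t ∈ L.faces with t.card = 3 ∧ e ⊆ t, c t = if e ⊆ Q then 1 else 0 := by
  have hspan := hL.triangleBoundary_mem_span hQ hedges
  rw [← Finset.coe_filter, Submodule.mem_span_image_finset_iff_exists_fun'] at hspan
  obtain ⟨c, hc⟩ := hspan
  refine ⟨c, fun e he => ?_⟩
  simpa [Finset.sum_apply, triangleBoundary_apply, he, Finset.sum_ite, Finset.filter_filter]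
    using congrFun hc e

end BoundaryChains

section Generalities

variable {K : SComplex} {d : ℕ} {s t : Finset ℕ} {u x y : ℕ}

lemma ne_empty_of_mem_faces (hs : s ∈ K.faces) : s ≠ ∅ :=
  fun h => K.not_empty_mem (h ▸ hs)

lemma mem_faces_of_insert_mem (h : insert x s ∈ K.faces) (hs : s ≠ ∅) : s ∈ K.faces :=
  K.down_closed _ h _ (Finset.subset_insert _ _) hs

lemma insert_mem_faces_of_subset (h : insert x t ∈ K.faces) (hst : s ⊆ t) :
    insert x s ∈ K.faces :=
  K.down_closed _ h _ (Finset.insert_subset_insert _ hst) (Finset.insert_ne_empty _ _)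

lemma subset_vertexSet (hs : s ∈ K.faces) : s ⊆ K.vertexSet :=
  Finset.le_sup (f := id) hs

lemma mem_properFaces : t ∈ properFaces s ↔ t ≠ ∅ ∧ t ⊂ s := by
  rw [properFaces, Finset.mem_filter, Finset.mem_powerset, Finset.ssubset_iff_subset_ne]
  tauto

lemma mem_simplexFaces : t ∈ simplexFaces s ↔ t ≠ ∅ ∧ t ⊆ s := by
  rw [simplexFaces, Finset.mem_filter, Finset.mem_powerset, and_comm]

lemma exists_isFacet_superset (hs : s ∈ K.faces) : ∃ F, K.IsFacet F ∧ s ⊆ F := by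
  obtain ⟨F, hsF, hF⟩ := K.faces.exists_le_maximal hs
  exact ⟨F, ⟨hF.1, fun t ht hFt => hFt.antisymm (hF.2 ht hFt)⟩, hsF⟩

lemma IsPure.exists_superset (hK : K.IsPure d) (hs : s ∈ K.faces) :
    ∃ F ∈ K.faces, F.card = d + 1 ∧ s ⊆ F := by
  obtain ⟨F, hF, hsF⟩ := exists_isFacet_superset hs
  exact ⟨F, hF.1, hK.2 F hF, hsF⟩

lemma IsPure.isFacet_iff (hK : K.IsPure d) : K.IsFacet s ↔ s ∈ K.faces ∧ s.card = d + 1 := by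
  refine ⟨fun hs => ⟨hs.1, hK.2 s hs⟩, fun ⟨hs, hcard⟩ => ⟨hs, fun t ht hst => ?_⟩⟩
  obtain ⟨F, -, hF, htF⟩ := hK.exists_superset ht
  exact Finset.eq_of_subset_of_card_le hst (by rw [hcard, ← hF]; exact Finset.card_le_card htF)

lemma mem_lk_singleton : t ∈ (K.lk {u}).faces ↔ t ≠ ∅ ∧ u ∉ t ∧ insert u t ∈ K.faces := by
  simp only [lk, Finset.mem_filter, Finset.union_singleton, ← Finset.disjoint_iff_inter_eq_empty,
    Finset.disjoint_singleton_right]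
  exact ⟨fun h => ⟨ne_empty_of_mem_faces h.1, h.2⟩,
    fun h => ⟨mem_faces_of_insert_mem h.2.2 h.1, h.2⟩⟩

lemma mem_lk_pair :
    t ∈ (K.lk {x, y}).faces ↔ t ≠ ∅ ∧ x ∉ t ∧ y ∉ t ∧ insert x (insert y t) ∈ K.faces := by
  simp only [lk, Finset.mem_filter, Finset.union_insert, Finset.union_singleton,
    ← Finset.disjoint_iff_inter_eq_empty, Finset.disjoint_insert_right,
    Finset.disjoint_singleton_right, and_assoc]
  exact ⟨fun h => ⟨ne_empty_of_mem_faces h.1, h.2⟩,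
    fun h => ⟨mem_faces_of_insert_mem (mem_faces_of_insert_mem h.2.2.2
      (Finset.insert_ne_empty _ _)) h.1, h.2⟩⟩

lemma vertAdj_lk_iff :
    (K.lk s).VertAdj x y ↔ x ∉ s ∧ y ∉ s ∧ insert x (insert y s) ∈ K.faces := by
  simp only [VertAdj, lk, Finset.mem_filter, ← Finset.disjoint_iff_inter_eq_empty,
    Finset.disjoint_insert_left, Finset.disjoint_singleton_left, Finset.insert_union,
    Finset.singleton_union, and_assoc]
  exact ⟨And.right, fun h => ⟨K.down_closed _ h.2.2 _
    (Finset.insert_subset_insert _ (by simp)) (Finset.insert_ne_empty _ _), h⟩⟩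

lemma singleton_mem_lk_iff : {x} ∈ (K.lk s).faces ↔ x ∉ s ∧ insert x s ∈ K.faces := by
  rw [← Finset.pair_eq_singleton]
  exact vertAdj_lk_iff.trans (by simp)

lemma reflTransGen_vertAdj_symm (h : Relation.ReflTransGen K.VertAdj x y) :
    Relation.ReflTransGen K.VertAdj y x :=
  have : Std.Symm K.VertAdj := ⟨fun x y h => by rwa [VertAdj, Finset.pair_comm]⟩
  symm h

lemma IsPure.lk_faces_nonempty (hK : K.IsPure d) (hs : s ∈ K.faces) (hcard : s.card ≤ d) :
    (K.lk s).faces.Nonempty := by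
  obtain ⟨F, hF, hFcard, hsF⟩ := hK.exists_superset hs
  obtain ⟨x, hx, hxs⟩ := Finset.exists_mem_notMem_of_card_lt_card (s := s) (t := F) (by omega)
  exact ⟨{x}, singleton_mem_lk_iff.2 ⟨hxs,
    K.down_closed F hF _ (Finset.insert_subset hx hsF) (Finset.insert_ne_empty _ _)⟩⟩

lemma IsPure.reflTransGen_facetAdj (hK : K.IsPure d) {F G r : Finset ℕ} (hF : K.IsFacet F)
    (hG : K.IsFacet G) (hr : r.card = d) (hrF : r ⊆ F) (hrG : r ⊆ G) :
    Relation.ReflTransGen K.FacetAdj F G := by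
  rcases eq_or_ne F G with rfl | hne
  · exact .refl
  have hFcard := hK.2 F hF
  have hle : d ≤ (F ∩ G).card := hr ▸ Finset.card_le_card (Finset.subset_inter hrF hrG)
  have hlt : (F ∩ G).card < F.card := Finset.card_lt_card <|
    Finset.inter_subset_left.ssubset_of_ne fun h => hne (hF.2 G hG.1 (Finset.inter_eq_left.1 h))
  exact .single ⟨hF, hG, by omega⟩

end Generalities

section GeneratedBy

variable {𝓕 𝓖 : Finset (Finset ℕ)} {d : ℕ} {s : Finset ℕ}

/-- The simplicial complex generated by the simplices in `𝓕`. -/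
def generatedBy (𝓕 : Finset (Finset ℕ)) : SComplex where
  faces := 𝓕.biUnion simplexFaces
  not_empty_mem := by simp [mem_simplexFaces]
  down_closed := by
    simp only [Finset.mem_biUnion, mem_simplexFaces]
    exact fun s ⟨F, hF, _, hsF⟩ t hts ht => ⟨F, hF, ht, hts.trans hsF⟩

lemma mem_generatedBy : s ∈ (generatedBy 𝓕).faces ↔ s ≠ ∅ ∧ ∃ F ∈ 𝓕, s ⊆ F := by
  simp only [generatedBy, Finset.mem_biUnion, mem_simplexFaces]
  tauto

lemma generatedBy_union_faces :
    (generatedBy (𝓕 ∪ 𝓖)).faces = (generatedBy 𝓕).faces ∪ (generatedBy 𝓖).faces :=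
  Finset.union_biUnion ..

lemma mem_generatedBy_and_card_iff (h𝓕 : ∀ F ∈ 𝓕, F.card = d + 1) :
    s ∈ (generatedBy 𝓕).faces ∧ s.card = d + 1 ↔ s ∈ 𝓕 := by
  rw [mem_generatedBy]
  refine ⟨fun ⟨⟨_, F, hF, hsF⟩, hs⟩ => ?_, fun hs => ⟨⟨?_, s, hs, subset_rfl⟩, h𝓕 s hs⟩⟩
  · rwa [Finset.eq_of_subset_of_card_le hsF (by rw [h𝓕 F hF, hs])]
  · exact Finset.card_pos.1 (by rw [h𝓕 s hs]; exact d.succ_pos) |>.ne_empty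

lemma isPure_generatedBy (hne : 𝓕.Nonempty) (h𝓕 : ∀ F ∈ 𝓕, F.card = d + 1) :
    (generatedBy 𝓕).IsPure d := by
  have hmem {F} (hF : F ∈ 𝓕) := ((mem_generatedBy_and_card_iff h𝓕).2 hF).1
  refine ⟨hne.imp fun F => hmem, fun s ⟨hs, hmax⟩ => ?_⟩
  obtain ⟨-, F, hF, hsF⟩ := mem_generatedBy.1 hs
  rw [hmax F (hmem hF) hsF, h𝓕 F hF]

end GeneratedBy

section Counting

variable {K : SComplex} {k x : ℕ} {B : Finset (Finset ℕ)}

lemma card_faces_mem (hB : ∀ t, t ∈ B ↔ t.card = k ∧ x ∉ t ∧ insert x t ∈ K.faces) :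
    ({s ∈ K.faces | s.card = k + 1 ∧ x ∈ s}).card = B.card := by
  refine Finset.card_nbij' (·.erase x) (insert x) ?_ ?_ ?_ ?_
  · simp only [Set.MapsTo, Finset.mem_coe, Finset.mem_filter, hB]
    refine fun s ⟨hs, hcard, hx⟩ => ⟨?_, Finset.notMem_erase x s, ?_⟩
    · rw [Finset.card_erase_of_mem hx, hcard, Nat.add_sub_cancel]
    · rwa [Finset.insert_erase hx]
  · simp only [Set.MapsTo, Finset.mem_coe, Finset.mem_filter, hB]
    exact fun t ⟨hcard, hx, ht⟩ =>
      ⟨ht, by rw [Finset.card_insert_of_notMem hx, hcard], Finset.mem_insert_self x t⟩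
  · simp only [Set.LeftInvOn, Finset.mem_coe, Finset.mem_filter]
    exact fun s hs => Finset.insert_erase hs.2.2
  · simp only [Set.RightInvOn, Set.LeftInvOn, Finset.mem_coe, hB]
    exact fun t ht => Finset.erase_insert ht.2.1

lemma fnum_eq_card_add_card
    (hB : ∀ t, t ∈ B ↔ t.card = k ∧ x ∉ t ∧ insert x t ∈ K.faces) :
    K.fnum k = ({s ∈ K.faces | s.card = k + 1 ∧ x ∉ s}).card + B.card := by
  rw [fnum, ← card_faces_mem hB, add_comm (Finset.card _),
    ← Finset.card_filter_add_card_filter_not (x ∈ ·), Finset.filter_filter, Finset.filter_filter]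

end Counting

section Antistar

variable {K : SComplex} {d : ℕ} {u : ℕ} {r s : Finset ℕ}

lemma IsNormalPseudomanifold.card_facets_antistar (hK : K.IsNormalPseudomanifold d)
    (hr : r ∈ K.faces) (hcard : r.card = d) (hu : u ∉ r) :
    ({F ∈ K.faces.filter (u ∉ ·) | F.card = d + 1 ∧ r ⊆ F}).card =
      if insert u r ∈ K.faces then 1 else 2 := by
  have hcardu : (insert u r).card = d + 1 := by rw [Finset.card_insert_of_notMem hu, hcard]
  have hstar {F : Finset ℕ} (hF : F.card = d + 1 ∧ r ⊆ F) : u ∈ F ↔ F = insert u r :=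
    ⟨fun huF => (Finset.eq_of_subset_of_card_le (Finset.insert_subset huF hF.2)
      (by rw [hF.1, hcardu])).symm, fun h => h ▸ Finset.mem_insert_self u r⟩
  have heq : {F ∈ K.faces.filter (u ∉ ·) | F.card = d + 1 ∧ r ⊆ F} =
      {F ∈ K.faces | F.card = d + 1 ∧ r ⊆ F}.erase (insert u r) := by
    ext F
    simp only [Finset.mem_filter, Finset.mem_erase]
    exact ⟨fun h => ⟨fun hF => h.1.2 ((hstar h.2).2 hF), h.1.1, h.2⟩,
      fun h => ⟨⟨h.2.1, fun hF => h.1 ((hstar h.2.2).1 hF)⟩, h.2.2⟩⟩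
  rw [heq, Finset.card_erase_eq_ite, hK.2.2.1 r hr hcard]
  simp [hcardu]

lemma IsNormalPseudomanifold.mem_bdryFaces_antistar (hK : K.IsNormalPseudomanifold d)
    (hd : d ≠ 0) : s ∈ bdryFaces (K.faces.filter (u ∉ ·)) d ↔
      s ∈ K.faces ∧ u ∉ s ∧ insert u s ∈ K.faces := by
  simp only [bdryFaces, Finset.mem_filter, and_assoc]
  refine and_congr_right fun _ => and_congr_right fun hus => ⟨?_, fun h => ?_⟩
  · rintro ⟨r, hr, hur, hsr, hcard, hone⟩
    rw [hK.card_facets_antistar hr hcard hur] at hone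
    exact insert_mem_faces_of_subset (by_contra fun h => by simp [h] at hone) hsr
  · obtain ⟨F, hF, hFcard, hsF⟩ := hK.1.exists_superset h
    rw [Finset.insert_subset_iff] at hsF
    have hcard : (F.erase u).card = d := by
      rw [Finset.card_erase_of_mem hsF.1, hFcard, Nat.add_sub_cancel]
    have hmem : F.erase u ∈ K.faces := K.down_closed F hF _ (Finset.erase_subset u F)
      (Finset.card_ne_zero.1 (hcard ▸ hd)).ne_empty
    refine ⟨F.erase u, hmem, Finset.notMem_erase u F, Finset.subset_erase.2 ⟨hsF.2, hus⟩,
      hcard, ?_⟩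
    rw [hK.card_facets_antistar hmem hcard (Finset.notMem_erase u F), Finset.insert_erase hsF.1,
      if_pos hF]

lemma IsNormalPseudomanifold.antistar_union_coneFaces (hK : K.IsNormalPseudomanifold d)
    (hd : d ≠ 0) (hu : {u} ∈ K.faces) :
    K.faces.filter (u ∉ ·) ∪ coneFaces u (bdryFaces (K.faces.filter (u ∉ ·)) d) = K.faces := by
  ext s
  simp only [coneFaces, Finset.mem_union, Finset.mem_image, Finset.mem_singleton,
    Finset.mem_filter, hK.mem_bdryFaces_antistar hd]
  refine ⟨?_, fun hs => ?_⟩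
  · rintro (hs | ((hs | ⟨t, ht, rfl⟩) | rfl))
    exacts [hs.1, hs.1, ht.2.2, hu]
  · by_cases hus : u ∈ s
    · rcases (s.erase u).eq_empty_or_nonempty with h | h
      · exact Or.inr (Or.inr ((Finset.insert_erase hus).symm.trans (by rw [h]; rfl)))
      · exact Or.inr (Or.inl (Or.inr ⟨s.erase u,
          ⟨K.down_closed s hs _ (Finset.erase_subset u s) h.ne_empty, Finset.notMem_erase u s,
            (Finset.insert_erase hus).symm ▸ hs⟩, Finset.insert_erase hus⟩))
    · exact Or.inl ⟨hs, hus⟩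

end Antistar

section LinkTriangles

variable {K : SComplex} {u : ℕ} {e t T : Finset ℕ}

/-- The triangles of the link of the vertex `u`. -/
def linkTriangles (K : SComplex) (u : ℕ) : Finset (Finset ℕ) := {T ∈ (K.lk {u}).faces | T.card = 3}

lemma mem_linkTriangles :
    T ∈ K.linkTriangles u ↔ T.card = 3 ∧ u ∉ T ∧ insert u T ∈ K.faces := by
  rw [linkTriangles, Finset.mem_filter, mem_lk_singleton]
  refine ⟨fun h => ⟨h.2, h.1.2⟩, fun h => ⟨⟨?_, h.2⟩, h.1⟩⟩
  exact (Finset.card_pos.1 (by omega)).ne_empty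

lemma mem_faces_of_mem_linkTriangles (hT : T ∈ K.linkTriangles u) : T ∈ K.faces :=
  (Finset.mem_filter.1 (Finset.mem_filter.1 hT).1).1

lemma erase_mem_linkTriangles {F : Finset ℕ} (hF : F ∈ K.faces) (hcard : F.card = 4)
    (hu : u ∈ F) : F.erase u ∈ K.linkTriangles u :=
  mem_linkTriangles.2 ⟨by rw [Finset.card_erase_of_mem hu, hcard], Finset.notMem_erase u F,
    (Finset.insert_erase hu).symm ▸ hF⟩

lemma exists_singleton_mem_lk_pair {w : ℕ} (hT : T ∈ K.linkTriangles u) (hw : w ∈ T) :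
    ∃ y ∈ T, y ≠ w ∧ {y} ∈ (K.lk {u, w}).faces := by
  obtain ⟨hcard, hu, hins⟩ := mem_linkTriangles.1 hT
  obtain ⟨y, hy, hyw⟩ := Finset.exists_mem_ne (s := T) (by omega) w
  refine ⟨y, hy, hyw, singleton_mem_lk_iff.2 ⟨?_, ?_⟩⟩
  · simp [hyw, ne_of_mem_of_not_mem hy hu]
  · rw [Finset.insert_comm]
    exact insert_mem_faces_of_subset hins (by simp [Finset.insert_subset_iff, hy, hw])

lemma IsNormalPseudomanifold.exists_linkTriangle_superset (hK : K.IsNormalPseudomanifold 3)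
    (hu : u ∉ t) (ht : insert u t ∈ K.faces) : ∃ T ∈ K.linkTriangles u, t ⊆ T := by
  obtain ⟨F, hF, hcard, htF⟩ := hK.1.exists_superset ht
  rw [Finset.insert_subset_iff] at htF
  exact ⟨F.erase u, erase_mem_linkTriangles hF hcard htF.1, Finset.subset_erase.2 ⟨htF.2, hu⟩⟩

lemma IsNormalPseudomanifold.card_linkTriangles_superset (hK : K.IsNormalPseudomanifold 3)
    (hcard : e.card = 2) (hu : u ∉ e) (he : insert u e ∈ K.faces) :
    ({T ∈ K.linkTriangles u | e ⊆ T}).card = 2 := by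
  rw [← hK.2.2.1 _ he (by rw [Finset.card_insert_of_notMem hu, hcard])]
  refine Finset.card_nbij' (insert u) (·.erase u) ?_ ?_ ?_ ?_
  · simp only [Set.MapsTo, Finset.mem_coe, Finset.mem_filter, mem_linkTriangles]
    exact fun T ⟨hT, heT⟩ => ⟨hT.2.2, by rw [Finset.card_insert_of_notMem hT.2.1, hT.1],
      Finset.insert_subset_insert u heT⟩
  · simp only [Set.MapsTo, Finset.mem_coe, Finset.mem_filter]
    refine fun F ⟨hF, hFcard, heF⟩ => ?_
    rw [Finset.insert_subset_iff] at heF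
    exact ⟨erase_mem_linkTriangles hF hFcard heF.1, Finset.subset_erase.2 ⟨heF.2, hu⟩⟩
  · simp only [Set.LeftInvOn, Finset.mem_coe, Finset.mem_filter, mem_linkTriangles]
    exact fun T hT => Finset.erase_insert hT.1.2.1
  · simp only [Set.RightInvOn, Set.LeftInvOn, Finset.mem_coe, Finset.mem_filter]
    exact fun F hF => Finset.insert_erase (hF.2.2 (Finset.mem_insert_self u e))

end LinkTriangles

/-- The data for splitting the vertex `u` along a missing triangle `cap` of `K` whose boundary is a
circle in the link of `u`: `side` tells on which side of this circle a triangle of the link lies,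
and `apex` provides, for each of the two sides, a vertex outside `K` taking over the role of `u`
on that side. -/
structure VertexSplitting (K : SComplex) (u : ℕ) where
  isNormalPseudomanifold : K.IsNormalPseudomanifold 3
  cap : Finset ℕ
  side : Finset ℕ → Bool
  apex : Bool → ℕ
  card_cap : cap.card = 3
  notMem_cap : u ∉ cap
  cap_notMem : cap ∉ K.faces
  insert_mem_of_ssubset_cap : ∀ t, t ⊂ cap → insert u t ∈ K.faces
  side_eq_iff : ∀ T₁ ∈ K.linkTriangles u, ∀ T₂ ∈ K.linkTriangles u, ∀ e : Finset ℕ, T₁ ≠ T₂ →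
    e.card = 2 → e ⊆ T₁ → e ⊆ T₂ → (side T₁ = side T₂ ↔ ¬ e ⊆ cap)
  apex_injective : Function.Injective apex
  apex_notMem : ∀ i, ∀ s ∈ K.faces, apex i ∉ s

namespace VertexSplitting

variable {K : SComplex} {u k x y : ℕ} {S : VertexSplitting K u} {i j : Bool}
  {e s t F G T : Finset ℕ}

section Discs

variable (S)

/-- The triangles of the link of `u` lying on side `i` of the boundary circle of `S.cap`. -/
def sideTriangles (i : Bool) : Finset (Finset ℕ) := {T ∈ K.linkTriangles u | S.side T = i}

/-- The faces, the empty one included, of the disc which is side `i` of the link of `u`. -/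
def discFaces (i : Bool) : Finset (Finset ℕ) := (S.sideTriangles i).biUnion Finset.powerset

/-- The faces, the empty one included, of the sphere obtained by closing the disc on side `i` with
the triangle `S.cap`. -/
def cappedFaces (i : Bool) : Finset (Finset ℕ) := insert S.cap (S.discFaces i)

variable {S}

lemma mem_sideTriangles : T ∈ S.sideTriangles i ↔ T ∈ K.linkTriangles u ∧ S.side T = i :=
  Finset.mem_filter

lemma mem_discFaces : t ∈ S.discFaces i ↔ ∃ T ∈ S.sideTriangles i, t ⊆ T := by
  simp only [discFaces, Finset.mem_biUnion, Finset.mem_powerset]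

lemma mem_discFaces_of_subset (ht : t ∈ S.discFaces i) (hst : s ⊆ t) : s ∈ S.discFaces i := by
  obtain ⟨T, hT, htT⟩ := mem_discFaces.1 ht
  exact mem_discFaces.2 ⟨T, hT, hst.trans htT⟩

lemma notMem_of_mem_discFaces (ht : t ∈ S.discFaces i) : u ∉ t := by
  obtain ⟨T, hT, htT⟩ := mem_discFaces.1 ht
  exact fun hu => (mem_linkTriangles.1 (mem_sideTriangles.1 hT).1).2.1 (htT hu)

lemma insert_mem_of_mem_discFaces (ht : t ∈ S.discFaces i) : insert u t ∈ K.faces := by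
  obtain ⟨T, hT, htT⟩ := mem_discFaces.1 ht
  exact insert_mem_faces_of_subset (mem_linkTriangles.1 (mem_sideTriangles.1 hT).1).2.2 htT

lemma exists_mem_discFaces (hu : u ∉ t) (ht : insert u t ∈ K.faces) :
    ∃ i, t ∈ S.discFaces i := by
  obtain ⟨T, hT, htT⟩ := S.isNormalPseudomanifold.exists_linkTriangle_superset hu ht
  exact ⟨S.side T, mem_discFaces.2 ⟨T, mem_sideTriangles.2 ⟨hT, rfl⟩, htT⟩⟩

lemma apex_notMem_of_mem_discFaces (ht : t ∈ S.discFaces i) (j : Bool) : S.apex j ∉ t :=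
  fun hj => S.apex_notMem j _ (insert_mem_of_mem_discFaces ht) (Finset.mem_insert_of_mem hj)

lemma side_eq_of_edge {T₁ T₂ : Finset ℕ} (h₁ : T₁ ∈ K.linkTriangles u)
    (h₂ : T₂ ∈ K.linkTriangles u) (he : e.card = 2) (he₁ : e ⊆ T₁) (he₂ : e ⊆ T₂)
    (hcap : ¬ e ⊆ S.cap) : S.side T₁ = S.side T₂ := by
  rcases eq_or_ne T₁ T₂ with rfl | hne
  · rfl
  · exact (S.side_eq_iff T₁ h₁ T₂ h₂ e hne he he₁ he₂).2 hcap

/- The triangles around `w` form a cycle, the link of the edge `uw`, and consecutive ones share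
an edge containing `w`, which is not an edge of the circle. -/
lemma side_eq_of_vertex {w : ℕ} (hw : w ∉ S.cap) {T₁ T₂ : Finset ℕ} (h₁ : T₁ ∈ K.linkTriangles u)
    (h₂ : T₂ ∈ K.linkTriangles u) (hw₁ : w ∈ T₁) (hw₂ : w ∈ T₂) : S.side T₁ = S.side T₂ := by
  have hpair {p : ℕ} {T : Finset ℕ} (hT : T ∈ K.linkTriangles u) (hpT : p ∈ T) (hwT : w ∈ T)
      {T' : Finset ℕ} (hT' : T' ∈ K.linkTriangles u) (hpT' : p ∈ T') (hwT' : w ∈ T')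
      (hpw : p ≠ w) : S.side T = S.side T' :=
    side_eq_of_edge hT hT' (Finset.card_pair hpw) (by simp [Finset.insert_subset_iff, *])
      (by simp [Finset.insert_subset_iff, *]) fun h => hw (h (by simp))
  obtain ⟨y, hy, hyw, hylk⟩ := exists_singleton_mem_lk_pair h₁ hw₁
  obtain ⟨z, hz, -, hzlk⟩ := exists_singleton_mem_lk_pair h₂ hw₂
  have huw : u ≠ w := fun h => (mem_linkTriangles.1 h₁).2.1 (h ▸ hw₁)
  have hedge : ({u, w} : Finset ℕ) ∈ K.faces := insert_mem_faces_of_subset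
    (mem_linkTriangles.1 h₁).2.2 (Finset.singleton_subset_iff.2 hw₁)
  have hwalk := (S.isNormalPseudomanifold.2.2.2 _ hedge Finset.card_le_two).2 y z hylk hzlk
  suffices h : ∀ T ∈ K.linkTriangles u, w ∈ T → z ∈ T → S.side T₁ = S.side T from h T₂ h₂ hw₂ hz
  clear hz hzlk
  induction hwalk with
  | refl => exact fun T hT hwT hyT => hpair h₁ hy hw₁ hT hyT hwT hyw
  | @tail p q _ hadj ih =>
    obtain ⟨hp, hq, hpq⟩ := vertAdj_lk_iff.1 hadj
    simp only [Finset.mem_insert, Finset.mem_singleton, not_or] at hp hq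
    rcases eq_or_ne p q with rfl | hne
    · exact ih
    intro T hT hwT hqT
    have hpqw : ({p, q, w} : Finset ℕ) ∈ K.linkTriangles u := by
      refine mem_linkTriangles.2 ⟨Finset.card_eq_three.2 ⟨p, q, w, hne, hp.2, hq.2, rfl⟩, ?_, ?_⟩
      · simp [Ne.symm hp.1, Ne.symm hq.1, huw]
      · rwa [show (insert u {p, q, w} : Finset ℕ) = insert p (insert q {u, w}) by grind]
    exact (ih _ hpqw (by simp) (by simp)).trans
      (hpair hpqw (by simp) (by simp) hT hqT hwT hq.2)

lemma subset_cap_of_mem_discFaces (hij : i ≠ j) (hi : t ∈ S.discFaces i)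
    (hj : t ∈ S.discFaces j) : t ⊆ S.cap := by
  obtain ⟨T₁, h₁, ht₁⟩ := mem_discFaces.1 hi
  obtain ⟨T₂, h₂, ht₂⟩ := mem_discFaces.1 hj
  rw [mem_sideTriangles] at h₁ h₂
  refine fun w hw => by_contra fun hwcap => hij ?_
  rw [← h₁.2, ← h₂.2, side_eq_of_vertex hwcap h₁.1 h₂.1 (ht₁ hw) (ht₂ hw)]

lemma mem_discFaces_of_superset (ht : t ∈ S.discFaces i) (hcap : ¬ t ⊆ S.cap) (hts : t ⊆ s)
    (hu : u ∉ s) (hs : insert u s ∈ K.faces) : s ∈ S.discFaces i := by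
  obtain ⟨j, hj⟩ := exists_mem_discFaces (S := S) hu hs
  rcases eq_or_ne i j with rfl | hij
  · exact hj
  · exact absurd (subset_cap_of_mem_discFaces hij ht (mem_discFaces_of_subset hj hts)) hcap

lemma ssubset_cap_of_card_eq_two (he : e ⊆ S.cap) (hcard : e.card = 2) : e ⊂ S.cap :=
  he.ssubset_of_ne fun h => absurd S.card_cap (by rw [← h, hcard]; norm_num)

lemma exists_edge_superset (ht : t ⊂ S.cap) : ∃ e, t ⊆ e ∧ e ⊆ S.cap ∧ e.card = 2 := by
  have hlt := Finset.card_lt_card ht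
  rw [S.card_cap] at hlt
  exact Finset.exists_subsuperset_card_eq ht.subset (by omega) (by rw [S.card_cap]; norm_num)

variable (S) in
lemma empty_ssubset_cap : ∅ ⊂ S.cap :=
  Finset.empty_ssubset.2 (Finset.card_pos.1 (by rw [S.card_cap]; norm_num))

lemma not_cap_subset_of_mem_discFaces (ht : t ∈ S.discFaces i) : ¬ S.cap ⊆ t := fun h =>
  S.cap_notMem <| mem_faces_of_insert_mem (insert_mem_faces_of_subset
    (insert_mem_of_mem_discFaces ht) h) S.empty_ssubset_cap.ne'

lemma card_sideTriangles_superset_of_subset_cap (he : e.card = 2) (hcap : e ⊆ S.cap) (i : Bool) :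
    ({T ∈ S.sideTriangles i | e ⊆ T}).card = 1 := by
  have hins := S.insert_mem_of_ssubset_cap e (ssubset_cap_of_card_eq_two hcap he)
  obtain ⟨A, B, hAB, hpair⟩ := Finset.card_eq_two.1 <|
    S.isNormalPseudomanifold.card_linkTriangles_superset he (fun h => S.notMem_cap (hcap h)) hins
  have hA : A ∈ ({T ∈ K.linkTriangles u | e ⊆ T}) := by simp [hpair]
  have hB : B ∈ ({T ∈ K.linkTriangles u | e ⊆ T}) := by simp [hpair]
  rw [Finset.mem_filter] at hA hB
  have hside : S.side A ≠ S.side B := fun h =>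
    (S.side_eq_iff A hA.1 B hB.1 e hAB he hA.2 hB.2).1 h hcap
  rw [sideTriangles, Finset.filter_comm, hpair, Finset.filter_insert, Finset.filter_singleton]
  rcases Bool.eq_or_eq_not i (S.side A) with rfl | rfl
  · simp [hside.symm]
  · simp [Bool.eq_not_of_ne hside.symm]

lemma mem_discFaces_of_ssubset_cap (ht : t ⊂ S.cap) (i : Bool) : t ∈ S.discFaces i := by
  obtain ⟨e, hte, hecap, he⟩ := exists_edge_superset ht
  obtain ⟨T, hT⟩ := Finset.card_pos.1
    ((card_sideTriangles_superset_of_subset_cap he hecap i).symm ▸ one_pos)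
  rw [Finset.mem_filter] at hT
  exact mem_discFaces.2 ⟨T, hT.1, hte.trans hT.2⟩

lemma empty_mem_discFaces (i : Bool) : ∅ ∈ S.discFaces i :=
  mem_discFaces_of_ssubset_cap S.empty_ssubset_cap i

lemma mem_cappedFaces : t ∈ S.cappedFaces i ↔ t = S.cap ∨ t ∈ S.discFaces i :=
  Finset.mem_insert

lemma mem_cappedFaces_of_subset_cap (ht : t ⊆ S.cap) (i : Bool) : t ∈ S.cappedFaces i :=
  mem_cappedFaces.2 <| ht.eq_or_ssubset.imp_right fun h => mem_discFaces_of_ssubset_cap h i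

lemma card_cappedTriangles_superset (he : e.card = 2) (hdisc : e ∈ S.discFaces i) :
    ({T ∈ insert S.cap (S.sideTriangles i) | e ⊆ T}).card = 2 := by
  rw [Finset.filter_insert]
  split_ifs with hcap
  · rw [Finset.card_insert_of_notMem, card_sideTriangles_superset_of_subset_cap he hcap]
    simp only [Finset.mem_filter, mem_sideTriangles]
    exact fun h => S.cap_notMem (mem_faces_of_mem_linkTriangles h.1.1)
  · obtain ⟨T, hT, heT⟩ := mem_discFaces.1 hdisc
    rw [← S.isNormalPseudomanifold.card_linkTriangles_superset he (notMem_of_mem_discFaces hdisc)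
      (insert_mem_of_mem_discFaces hdisc), sideTriangles, Finset.filter_comm,
      Finset.filter_true_of_mem]
    rw [mem_sideTriangles] at hT
    intro T' hT'
    rw [Finset.mem_filter] at hT'
    rw [← hT.2, side_eq_of_edge hT'.1 hT.1 he hT'.2 heT hcap]

end Discs

lemma apex_ne (i : Bool) : S.apex i ≠ u := by
  have h := S.apex_notMem i _ (insert_mem_of_mem_discFaces (empty_mem_discFaces (S := S) i))
  simpa using h

lemma apex_notMem_cap (i : Bool) : S.apex i ∉ S.cap := by
  intro h
  have hmem : {S.apex i} ∈ S.discFaces i := mem_discFaces_of_ssubset_cap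
    (Finset.ssubset_iff_subset_ne.2 ⟨Finset.singleton_subset_iff.2 h, fun heq => by
      simpa [← heq] using S.card_cap⟩) i
  exact apex_notMem_of_mem_discFaces hmem i (Finset.mem_singleton_self _)

lemma apex_notMem_of_mem_cappedFaces (ht : t ∈ S.cappedFaces i) (j : Bool) : S.apex j ∉ t := by
  rcases mem_cappedFaces.1 ht with rfl | ht
  exacts [apex_notMem_cap j, apex_notMem_of_mem_discFaces ht j]

section Lift

variable (S) in
/-- The facet of the split complex corresponding to the facet `F` of `K`: it contains the apex on
the side of `F` instead of `u`. -/
def lift (F : Finset ℕ) : Finset ℕ :=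
  if u ∈ F then insert (S.apex (S.side (F.erase u))) (F.erase u) else F

lemma subset_lift_iff (hs : ∀ i, S.apex i ∉ s) : s ⊆ S.lift F ↔ s ⊆ F.erase u := by
  rw [lift]
  split_ifs with hu
  · rw [Finset.subset_insert_iff_of_notMem (hs _)]
  · rw [Finset.erase_eq_of_notMem hu]

lemma apex_mem_lift_iff (hF : F ∈ K.faces) :
    S.apex i ∈ S.lift F ↔ u ∈ F ∧ S.side (F.erase u) = i := by
  have hi : S.apex i ∉ F := S.apex_notMem i F hF
  rw [lift]
  split_ifs with hu
  · simp [hu, hi, S.apex_injective.eq_iff, eq_comm]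
  · simp [hu, hi]

lemma insert_apex_subset_lift_iff (hF : F ∈ K.faces) (ht : ∀ j, S.apex j ∉ t) :
    insert (S.apex i) t ⊆ S.lift F ↔ (u ∈ F ∧ S.side (F.erase u) = i) ∧ t ⊆ F.erase u := by
  rw [Finset.insert_subset_iff, apex_mem_lift_iff hF, subset_lift_iff ht]

lemma card_lift (hF : F ∈ K.faces) : (S.lift F).card = F.card := by
  rw [lift]
  split_ifs with hu
  · rw [Finset.card_insert_of_notMem fun h => S.apex_notMem _ F hF (Finset.mem_of_mem_erase h),
      Finset.card_erase_add_one hu]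
  · rfl

lemma lift_injOn : Set.InjOn S.lift K.faces := by
  have herase {F G : Finset ℕ} (hF : F ∈ K.faces) (h : S.lift F = S.lift G) :
      F.erase u ⊆ G.erase u := by
    have havoid (i) : S.apex i ∉ F.erase u :=
      fun hi => S.apex_notMem i F hF (Finset.mem_of_mem_erase hi)
    rw [← subset_lift_iff havoid, ← h, subset_lift_iff havoid]
  have hmem {F : Finset ℕ} (hF : F ∈ K.faces) : u ∈ F ↔ ∃ i, S.apex i ∈ S.lift F := by
    simp [apex_mem_lift_iff hF]
  intro F hF G hG h
  have heq := (herase hF h).antisymm (herase hG h.symm)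
  have hu : u ∈ F ↔ u ∈ G := by rw [hmem hF, hmem hG, h]
  by_cases huF : u ∈ F
  · rw [← Finset.insert_erase huF, heq, Finset.insert_erase (hu.1 huF)]
  · rwa [Finset.erase_eq_of_notMem huF, Finset.erase_eq_of_notMem (mt hu.2 huF)] at heq

variable (S) in
/-- The facets of the split complex corresponding to facets of `K`. -/
def liftFacets : Finset (Finset ℕ) := {F ∈ K.faces | F.card = 4}.image S.lift

lemma mem_liftFacets : s ∈ S.liftFacets ↔ ∃ F ∈ K.faces, F.card = 4 ∧ S.lift F = s := by
  simp only [liftFacets, Finset.mem_image, Finset.mem_filter, and_assoc]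

lemma card_of_mem_liftFacets (hs : s ∈ S.liftFacets) : s.card = 4 := by
  obtain ⟨F, hF, hcard, rfl⟩ := mem_liftFacets.1 hs
  rw [card_lift hF, hcard]

end Lift

section Slit

variable (S) in
/-- The complex obtained from `K` by replacing the star of `u` by the two cones over the two sides
of its link. -/
def slit : SComplex := generatedBy S.liftFacets

lemma mem_slit : s ∈ S.slit.faces ↔ s ≠ ∅ ∧ ∃ F ∈ K.faces, F.card = 4 ∧ s ⊆ S.lift F := by
  simp only [slit, mem_generatedBy, mem_liftFacets]
  grind

lemma mem_slit_of_apex_notMem (hs : ∀ i, S.apex i ∉ s) :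
    s ∈ S.slit.faces ↔ s ∈ K.faces ∧ u ∉ s := by
  simp only [mem_slit, subset_lift_iff hs, Finset.subset_erase]
  refine ⟨fun ⟨hne, F, hF, _, hsF, hu⟩ => ⟨K.down_closed F hF s hsF hne, hu⟩, fun ⟨h, hu⟩ => ?_⟩
  obtain ⟨F, hF, hcard, hsF⟩ := S.isNormalPseudomanifold.1.exists_superset h
  exact ⟨ne_empty_of_mem_faces h, F, hF, hcard, hsF, hu⟩

lemma insert_apex_mem_slit (ht : ∀ j, S.apex j ∉ t) :
    insert (S.apex i) t ∈ S.slit.faces ↔ t ∈ S.discFaces i := by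
  simp only [mem_slit, mem_discFaces, mem_sideTriangles]
  constructor
  · rintro ⟨-, F, hF, hcard, htF⟩
    obtain ⟨⟨hu, hside⟩, htF⟩ := (insert_apex_subset_lift_iff hF ht).1 htF
    exact ⟨F.erase u, ⟨erase_mem_linkTriangles hF hcard hu, hside⟩, htF⟩
  · rintro ⟨T, ⟨hT, hside⟩, htT⟩
    obtain ⟨hcard, hu, hins⟩ := mem_linkTriangles.1 hT
    refine ⟨Finset.insert_ne_empty _ _, insert u T, hins, ?_, ?_⟩
    · rw [Finset.card_insert_of_notMem hu, hcard]
    · rw [insert_apex_subset_lift_iff hins ht, Finset.erase_insert hu]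
      exact ⟨⟨Finset.mem_insert_self u T, hside⟩, htT⟩

lemma eq_of_apex_mem_slit (hs : s ∈ S.slit.faces) (hi : S.apex i ∈ s) (hj : S.apex j ∈ s) :
    i = j := by
  obtain ⟨-, F, hF, -, hsF⟩ := mem_slit.1 hs
  exact ((apex_mem_lift_iff hF).1 (hsF hi)).2.symm.trans ((apex_mem_lift_iff hF).1 (hsF hj)).2

end Slit

section Expansion

variable (S) in
/-- The complex obtained from `K` by expanding `u` into the edge joining the two apexes. -/
def expansion : SComplex := generatedBy <| S.liftFacets ∪
  (S.cap.powersetCard 2).image fun e => insert (S.apex true) (insert (S.apex false) e)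

lemma mem_expansion : s ∈ S.expansion.faces ↔ s ∈ S.slit.faces ∨ s ≠ ∅ ∧
    ∃ e ⊆ S.cap, e.card = 2 ∧ s ⊆ insert (S.apex true) (insert (S.apex false) e) := by
  simp only [expansion, generatedBy_union_faces, Finset.mem_union, slit]
  simp only [mem_generatedBy (𝓕 := Finset.image _ _), Finset.mem_image, Finset.mem_powersetCard]
  grind

lemma mem_slit_iff_mem_expansion (hs : ¬ {S.apex true, S.apex false} ⊆ s) :
    s ∈ S.slit.faces ↔ s ∈ S.expansion.faces := by
  rw [mem_expansion]
  refine ⟨Or.inl, fun h => h.elim id fun ⟨hne, e, hecap, he, hse⟩ => ?_⟩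
  have hmem (i) : insert (S.apex i) e ∈ S.slit.faces := by
    exact (insert_apex_mem_slit fun j h => apex_notMem_cap j (hecap h)).2
      (mem_discFaces_of_ssubset_cap (ssubset_cap_of_card_eq_two hecap he) i)
  by_cases hfalse : S.apex false ∈ s
  · have htrue : S.apex true ∉ s := fun h => hs (by simp [Finset.insert_subset_iff, h, hfalse])
    exact S.slit.down_closed _ (hmem false) s
      ((Finset.subset_insert_iff_of_notMem htrue).1 hse) hne
  · rw [Finset.insert_comm, Finset.subset_insert_iff_of_notMem hfalse] at hse
    exact S.slit.down_closed _ (hmem true) s hse hne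

lemma mem_expansion_of_apex_notMem (hs : ∀ i, S.apex i ∉ s) :
    s ∈ S.expansion.faces ↔ s ∈ K.faces ∧ u ∉ s := by
  rw [← mem_slit_iff_mem_expansion fun h => hs true (h (by simp)), mem_slit_of_apex_notMem hs]

lemma insert_apex_mem_expansion (ht : ∀ j, S.apex j ∉ t) :
    insert (S.apex i) t ∈ S.expansion.faces ↔ t ∈ S.discFaces i := by
  rw [← mem_slit_iff_mem_expansion, insert_apex_mem_slit ht]
  cases i <;> simp [Finset.insert_subset_iff, ht, S.apex_injective.eq_iff]

lemma insert_apex_insert_apex_mem_expansion (ht : ∀ j, S.apex j ∉ t) :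
    insert (S.apex true) (insert (S.apex false) t) ∈ S.expansion.faces ↔ t ⊂ S.cap := by
  rw [mem_expansion, or_iff_right fun h => Bool.noConfusion <|
    eq_of_apex_mem_slit (i := true) (j := false) h (by simp) (by simp)]
  have hsub (e : Finset ℕ) : insert (S.apex true) (insert (S.apex false) t) ⊆
      insert (S.apex true) (insert (S.apex false) e) ↔ t ⊆ e := by
    simp [Finset.insert_subset_iff, Finset.subset_insert_iff_of_notMem, ht]
  simp only [hsub, ne_eq, Finset.insert_ne_empty, not_false_eq_true, true_and]
  refine ⟨fun ⟨e, hecap, he, hte⟩ => hte.trans_ssubset (ssubset_cap_of_card_eq_two hecap he),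
    fun h => ?_⟩
  obtain ⟨e, hte, hecap, he⟩ := exists_edge_superset h
  exact ⟨e, hecap, he, hte⟩

lemma lk_expansion : (S.expansion.lk {S.apex true, S.apex false}).faces = properFaces S.cap := by
  ext t
  rw [mem_lk_pair, mem_properFaces]
  refine and_congr_right fun _ => ⟨fun ⟨htrue, hfalse, h⟩ => ?_, fun h => ?_⟩
  · exact (insert_apex_insert_apex_mem_expansion (Bool.forall_bool.2 ⟨hfalse, htrue⟩)).1 h
  · have ht (j) : S.apex j ∉ t := fun hj => apex_notMem_cap j (h.subset hj)
    exact ⟨ht true, ht false, (insert_apex_insert_apex_mem_expansion ht).2 h⟩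

lemma lk_expansion_inter_lk_expansion :
    (S.expansion.lk {S.apex true}).faces ∩ (S.expansion.lk {S.apex false}).faces =
      (S.expansion.lk {S.apex true, S.apex false}).faces := by
  ext t
  rw [lk_expansion, Finset.mem_inter, mem_lk_singleton, mem_lk_singleton, mem_properFaces]
  refine ⟨fun ⟨⟨hne, htrue, h₁⟩, _, hfalse, h₂⟩ => ?_, fun ⟨hne, h⟩ => ?_⟩
  · have ht : ∀ j, S.apex j ∉ t := Bool.forall_bool.2 ⟨hfalse, htrue⟩
    rw [insert_apex_mem_expansion ht] at h₁ h₂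
    exact ⟨hne, subset_cap_of_mem_discFaces (by simp) h₁ h₂, not_cap_subset_of_mem_discFaces h₁⟩
  · have ht (j) : S.apex j ∉ t := fun hj => apex_notMem_cap j (h.subset hj)
    have hmem (i) := (insert_apex_mem_expansion ht).2 (mem_discFaces_of_ssubset_cap h i)
    exact ⟨⟨hne, ht _, hmem _⟩, hne, ht _, hmem _⟩

variable (S) in
theorem edgeContraction_expansion : EdgeContraction S.expansion K := by
  refine ⟨S.apex true, S.apex false, ?_, S.apex_injective.ne (by simp),
    lk_expansion_inter_lk_expansion, u, ?_, ?_⟩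
  · rw [← insert_empty_eq, insert_apex_insert_apex_mem_expansion (by simp)]
    exact S.empty_ssubset_cap
  · rw [vertexSet, Finset.mem_sup]
    rintro ⟨s, hs, hus⟩
    have hu := S.expansion.down_closed s hs _ (Finset.singleton_subset_iff.2 hus) (by simp)
    rw [mem_expansion_of_apex_notMem (by simp [apex_ne])] at hu
    exact hu.2 (Finset.mem_singleton_self u)
  · have hantistar : {s ∈ S.expansion.faces | S.apex true ∉ s ∧ S.apex false ∉ s} =
        K.faces.filter (u ∉ ·) := by
      ext s
      rw [Finset.mem_filter, Finset.mem_filter]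
      refine ⟨fun ⟨hs, htrue, hfalse⟩ =>
        (mem_expansion_of_apex_notMem (Bool.forall_bool.2 ⟨hfalse, htrue⟩)).1 hs, fun hs => ?_⟩
      have h (i) := S.apex_notMem i s hs.1
      exact ⟨(mem_expansion_of_apex_notMem h).2 hs, h _, h _⟩
    rw [hantistar, S.isNormalPseudomanifold.antistar_union_coneFaces (by norm_num)
      (insert_mem_of_mem_discFaces (empty_mem_discFaces (S := S) true))]

end Expansion

section Splitting

variable (S) in
/-- The facets of the complex `S.splitting`. -/
def splittingFacets : Finset (Finset ℕ) :=
  S.liftFacets ∪ Finset.univ.image fun i => insert (S.apex i) S.cap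

variable (S) in
/-- The complex obtained from `K` by replacing the star of `u` by the two cones with the apexes as
vertices over the two spheres into which `S.cap` cuts the link of `u`. -/
def splitting : SComplex := generatedBy S.splittingFacets

lemma mem_splittingFacets :
    s ∈ S.splittingFacets ↔ s ∈ S.liftFacets ∨ ∃ i, insert (S.apex i) S.cap = s := by
  simp only [splittingFacets, Finset.mem_union, Finset.mem_image, Finset.mem_univ, true_and]

lemma mem_splitting : s ∈ S.splitting.faces ↔
    s ∈ S.slit.faces ∨ s ≠ ∅ ∧ ∃ i, s ⊆ insert (S.apex i) S.cap := by
  simp only [splitting, slit, mem_generatedBy, mem_splittingFacets]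
  grind

lemma mem_splitting_of_apex_notMem (hs : ∀ i, S.apex i ∉ s) :
    s ∈ S.splitting.faces ↔ s ∈ K.faces ∧ u ∉ s ∨ s = S.cap := by
  simp only [mem_splitting, mem_slit_of_apex_notMem hs,
    Finset.subset_insert_iff_of_notMem (hs _), exists_const]
  refine ⟨fun h => or_iff_not_imp_right.2 fun hcap => h.elim id fun ⟨hne, hsub⟩ => ?_,
    fun h => h.imp_right fun h => ⟨?_, h.subset⟩⟩
  · have hdisc := mem_discFaces_of_ssubset_cap (hsub.ssubset_of_ne hcap) true
    exact ⟨mem_faces_of_insert_mem (insert_mem_of_mem_discFaces hdisc) hne,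
      notMem_of_mem_discFaces hdisc⟩
  · rw [h]
    exact S.empty_ssubset_cap.ne'

lemma eq_of_apex_mem_splitting (hs : s ∈ S.splitting.faces) (hi : S.apex i ∈ s)
    (hj : S.apex j ∈ s) : i = j := by
  rcases mem_splitting.1 hs with hs | ⟨-, k, hk⟩
  · exact eq_of_apex_mem_slit hs hi hj
  · have heq {l} (hl : S.apex l ∈ s) : l = k := by
      simpa [S.apex_injective.eq_iff, apex_notMem_cap] using hk hl
    rw [heq hi, heq hj]

lemma insert_apex_mem_splitting (hi : S.apex i ∉ t) :
    insert (S.apex i) t ∈ S.splitting.faces ↔ t ∈ S.cappedFaces i := by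
  constructor
  · intro h
    have ht (j) : S.apex j ∉ t := fun hj => hi <|
      eq_of_apex_mem_splitting h (Finset.mem_insert_self _ _) (Finset.mem_insert_of_mem hj) ▸ hj
    rcases mem_splitting.1 h with h | ⟨-, k, hk⟩
    · exact mem_cappedFaces.2 (Or.inr ((insert_apex_mem_slit ht).1 h))
    · refine mem_cappedFaces_of_subset_cap ?_ i
      exact (Finset.subset_insert_iff_of_notMem (ht k)).1 ((Finset.subset_insert _ _).trans hk)
  · rw [mem_splitting, mem_cappedFaces]
    rintro (rfl | h)
    · exact Or.inr ⟨Finset.insert_ne_empty _ _, i, subset_rfl⟩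
    · exact Or.inl ((insert_apex_mem_slit (apex_notMem_of_mem_discFaces h)).2 h)

lemma mem_splitting_iff : s ∈ S.splitting.faces ↔
    ((s ∈ K.faces ∧ u ∉ s) ∨ s = S.cap) ∨ ∃ i, ∃ t ∈ S.cappedFaces i, s = insert (S.apex i) t := by
  by_cases hs : ∀ i, S.apex i ∉ s
  · rw [mem_splitting_of_apex_notMem hs, or_iff_left (b := ∃ _, _)]
    rintro ⟨i, t, -, rfl⟩
    exact hs i (Finset.mem_insert_self _ _)
  · push Not at hs
    obtain ⟨i, hi⟩ := hs
    rw [or_iff_right]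
    · refine ⟨fun h => ⟨i, s.erase (S.apex i), ?_, (Finset.insert_erase hi).symm⟩, ?_⟩
      · rwa [← insert_apex_mem_splitting (Finset.notMem_erase _ _), Finset.insert_erase hi]
      · rintro ⟨j, t, ht, rfl⟩
        exact (insert_apex_mem_splitting (apex_notMem_of_mem_cappedFaces ht j)).2 ht
    · rintro (h | rfl)
      exacts [S.apex_notMem i s h.1 hi, apex_notMem_cap i hi]

lemma slit_faces : S.slit.faces =
    {s ∈ S.expansion.faces | ¬ {S.apex true, S.apex false} ⊆ s} := by
  ext s
  rw [Finset.mem_filter]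
  refine ⟨fun hs => ?_, fun hs => (mem_slit_iff_mem_expansion hs.2).2 hs.1⟩
  have hedge : ¬ {S.apex true, S.apex false} ⊆ s := fun h => Bool.noConfusion <|
    eq_of_apex_mem_slit (i := true) (j := false) hs (h (by simp)) (h (by simp))
  exact ⟨(mem_slit_iff_mem_expansion hedge).1 hs, hedge⟩

variable (S) in
theorem bistellarTwoMove_splitting : BistellarTwoMove S.expansion S.splitting := by
  obtain ⟨a, b, c, -, -, -, hcap⟩ := Finset.card_eq_three.1 S.card_cap
  refine ⟨S.apex true, S.apex false, a, b, c, ?_⟩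
  rw [← hcap]
  refine ⟨?_, S.apex_injective.ne (by simp), S.card_cap, apex_notMem_cap _, apex_notMem_cap _,
    lk_expansion, fun h => ?_, ?_⟩
  · rw [← insert_empty_eq, insert_apex_insert_apex_mem_expansion (by simp)]
    exact S.empty_ssubset_cap
  · exact S.cap_notMem ((mem_expansion_of_apex_notMem apex_notMem_cap).1 h).1
  · ext s
    simp only [← slit_faces, Finset.mem_union, mem_splitting, mem_simplexFaces, Bool.exists_bool]
    tauto

end Splitting

section Facets

lemma card_of_mem_splittingFacets (hs : s ∈ S.splittingFacets) : s.card = 4 := by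
  rcases mem_splittingFacets.1 hs with hs | ⟨i, rfl⟩
  · exact card_of_mem_liftFacets hs
  · rw [Finset.card_insert_of_notMem (apex_notMem_cap i), S.card_cap]

variable (S) in
lemma isPure_splitting : S.splitting.IsPure 3 :=
  isPure_generatedBy ⟨_, mem_splittingFacets.2 (Or.inr ⟨true, rfl⟩)⟩
    fun _ => card_of_mem_splittingFacets

lemma mem_splitting_and_card_iff :
    s ∈ S.splitting.faces ∧ s.card = 4 ↔ s ∈ S.splittingFacets :=
  mem_generatedBy_and_card_iff fun _ => card_of_mem_splittingFacets

lemma isFacet_splitting_iff : S.splitting.IsFacet s ↔ s ∈ S.splittingFacets :=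
  S.isPure_splitting.isFacet_iff.trans mem_splitting_and_card_iff

lemma mem_insert_cap_sideTriangles :
    t ∈ insert S.cap (S.sideTriangles i) ↔ t ∈ S.cappedFaces i ∧ t.card = 3 := by
  rw [Finset.mem_insert, mem_cappedFaces]
  constructor
  · rintro (rfl | ht)
    · exact ⟨Or.inl rfl, S.card_cap⟩
    · exact ⟨Or.inr (mem_discFaces.2 ⟨t, ht, subset_rfl⟩),
        (mem_linkTriangles.1 (mem_sideTriangles.1 ht).1).1⟩
  · rintro ⟨rfl | ht, hcard⟩
    · exact Or.inl rfl
    · obtain ⟨T, hT, htT⟩ := mem_discFaces.1 ht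
      rw [Finset.eq_of_subset_of_card_le htT
        (by rw [hcard, (mem_linkTriangles.1 (mem_sideTriangles.1 hT).1).1])]
      exact Or.inr hT

lemma card_facets_superset_of_mem (hs : s ∈ K.faces) (hu : u ∉ s) (hcard : s.card = 3) :
    ({F ∈ S.splitting.faces | F.card = 4 ∧ s ⊆ F}).card = 2 := by
  have havoid (i) := S.apex_notMem i s hs
  rw [← S.isNormalPseudomanifold.2.2.1 s hs hcard,
    ← Finset.card_image_of_injOn (f := S.lift) (lift_injOn.mono (Finset.filter_subset _ _))]
  congr 1
  ext F
  simp only [Finset.mem_filter, ← and_assoc, mem_splitting_and_card_iff, mem_splittingFacets,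
    mem_liftFacets, Finset.mem_image]
  constructor
  · rintro ⟨⟨F, ⟨hF, hFcard⟩, rfl⟩ | ⟨i, rfl⟩, hsF⟩
    · rw [subset_lift_iff havoid, Finset.subset_erase] at hsF
      exact ⟨F, ⟨⟨hF, hFcard⟩, hsF.1⟩, rfl⟩
    · rw [Finset.subset_insert_iff_of_notMem (havoid i)] at hsF
      rw [Finset.eq_of_subset_of_card_le hsF (by rw [S.card_cap, hcard])] at hs
      exact absurd hs S.cap_notMem
  · rintro ⟨F, ⟨⟨hF, hFcard⟩, hsF⟩, rfl⟩
    exact ⟨Or.inl ⟨F, ⟨hF, hFcard⟩, rfl⟩,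
      (subset_lift_iff havoid).2 (Finset.subset_erase.2 ⟨hsF, hu⟩)⟩

lemma card_facets_superset_cap :
    ({F ∈ S.splitting.faces | F.card = 4 ∧ S.cap ⊆ F}).card = 2 := by
  have hinj : Function.Injective fun i => insert (S.apex i) S.cap := by
    intro i j (hij : insert _ _ = insert _ _)
    have hi : S.apex i ∈ insert (S.apex j) S.cap := hij ▸ Finset.mem_insert_self _ _
    simpa [apex_notMem_cap, S.apex_injective.eq_iff] using hi
  rw [← Fintype.card_bool, ← Finset.card_univ, ← Finset.card_image_of_injective _ hinj]
  congr 1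
  ext F
  simp only [Finset.mem_filter, ← and_assoc, mem_splitting_and_card_iff, mem_splittingFacets,
    mem_liftFacets, Finset.mem_image, Finset.mem_univ, true_and]
  constructor
  · rintro ⟨⟨F, ⟨hF, -⟩, rfl⟩ | ⟨i, rfl⟩, hsF⟩
    · rw [subset_lift_iff apex_notMem_cap, Finset.subset_erase] at hsF
      exact absurd (K.down_closed F hF _ hsF.1 S.empty_ssubset_cap.ne')
        S.cap_notMem
    · exact ⟨i, rfl⟩
  · rintro ⟨i, rfl⟩
    exact ⟨Or.inr ⟨i, rfl⟩, Finset.subset_insert _ _⟩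

lemma card_facets_superset_insert_apex (he : e ∈ S.discFaces i) (hcard : e.card = 2) :
    ({F ∈ S.splitting.faces | F.card = 4 ∧ insert (S.apex i) e ⊆ F}).card = 2 := by
  have hi := apex_notMem_of_mem_discFaces he i
  have havoid {T} (hT : T ∈ insert S.cap (S.sideTriangles i)) : S.apex i ∉ T :=
    apex_notMem_of_mem_cappedFaces (mem_insert_cap_sideTriangles.1 hT).1 i
  rw [← card_cappedTriangles_superset hcard he]
  refine (Finset.card_nbij' (insert (S.apex i)) (·.erase (S.apex i)) ?_ ?_ ?_ ?_).symm
  · simp only [Set.MapsTo, Finset.mem_coe, Finset.mem_filter]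
    rintro T ⟨hT, heT⟩
    rw [Finset.card_insert_of_notMem (havoid hT), insert_apex_mem_splitting (havoid hT)]
    rw [mem_insert_cap_sideTriangles] at hT
    exact ⟨hT.1, by rw [hT.2], Finset.insert_subset_insert _ heT⟩
  · simp only [Set.MapsTo, Finset.mem_coe, Finset.mem_filter, mem_insert_cap_sideTriangles,
      Finset.insert_subset_iff]
    rintro F ⟨hF, hFcard, hiF, heF⟩
    rw [Finset.card_erase_of_mem hiF, ← insert_apex_mem_splitting (Finset.notMem_erase _ _),
      Finset.insert_erase hiF]
    exact ⟨⟨hF, by omega⟩, Finset.subset_erase.2 ⟨heF, hi⟩⟩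
  · simp only [Set.LeftInvOn, Finset.mem_coe, Finset.mem_filter]
    exact fun T hT => Finset.erase_insert (havoid hT.1)
  · simp only [Set.RightInvOn, Set.LeftInvOn, Finset.mem_coe, Finset.mem_filter]
    exact fun F hF => Finset.insert_erase (hF.2.2 (Finset.mem_insert_self _ _))

lemma mem_discFaces_of_card_le (ht : t ∈ S.cappedFaces i) (hcard : t.card ≤ 2) :
    t ∈ S.discFaces i := by
  rcases mem_cappedFaces.1 ht with rfl | ht
  · exact absurd hcard (by simp [S.card_cap])
  · exact ht

lemma card_facets_splitting_superset (hs : s ∈ S.splitting.faces) (hcard : s.card = 3) :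
    ({F ∈ S.splitting.faces | F.card = 4 ∧ s ⊆ F}).card = 2 := by
  rcases mem_splitting_iff.1 hs with (⟨hs, hu⟩ | rfl) | ⟨i, e, he, rfl⟩
  · exact card_facets_superset_of_mem hs hu hcard
  · exact card_facets_superset_cap
  · rw [Finset.card_insert_of_notMem (apex_notMem_of_mem_cappedFaces he i)] at hcard
    exact card_facets_superset_insert_apex (mem_discFaces_of_card_le he (by omega)) (by omega)

end Facets

section StronglyConnected

lemma isFacet_lift (hF : K.IsFacet F) : S.splitting.IsFacet (S.lift F) :=
  isFacet_splitting_iff.2 <| mem_splittingFacets.2 <| Or.inl <|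
    mem_liftFacets.2 ⟨F, hF.1, S.isNormalPseudomanifold.1.2 F hF, rfl⟩

variable (S) in
lemma isFacet_insert_apex_cap (i : Bool) : S.splitting.IsFacet (insert (S.apex i) S.cap) :=
  isFacet_splitting_iff.2 <| mem_splittingFacets.2 <| Or.inr ⟨i, rfl⟩

lemma insert_apex_subset_lift (hF : F ∈ K.faces) (hu : u ∈ F) (ht : u ∉ t) (htF : t ⊆ F) :
    insert (S.apex (S.side (F.erase u))) t ⊆ S.lift F :=
  (insert_apex_subset_lift_iff hF fun j hj => S.apex_notMem j F hF (htF hj)).2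
    ⟨⟨hu, rfl⟩, Finset.subset_erase.2 ⟨htF, ht⟩⟩

lemma card_insert_apex (he : e ⊆ S.cap) (hcard : e.card = 2) :
    (insert (S.apex i) e).card = 3 := by
  rw [Finset.card_insert_of_notMem fun h => apex_notMem_cap i (he h), hcard]

/- If the triangles opposite to `u` in `F` and `G` lie on different sides, then `e` is an edge of
the circle, and the path crosses from one cone to the other through the two facets on `S.cap`. -/
lemma reflTransGen_lift_of_insert_subset (hF : K.IsFacet F) (hG : K.IsFacet G) (he : e.card = 2)
    (hu : u ∉ e) (heF : insert u e ⊆ F) (heG : insert u e ⊆ G) :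
    Relation.ReflTransGen S.splitting.FacetAdj (S.lift F) (S.lift G) := by
  have hjoin {F G r : Finset ℕ} (hF hG hr) := S.isPure_splitting.reflTransGen_facetAdj
    (F := F) (G := G) (r := r) hF hG hr
  rw [Finset.insert_subset_iff] at heF heG
  have hsubF := insert_apex_subset_lift (S := S) hF.1 heF.1 hu heF.2
  have hsubG := insert_apex_subset_lift (S := S) hG.1 heG.1 hu heG.2
  have hcapFacet := S.isFacet_insert_apex_cap
  by_cases hcap : e ⊆ S.cap
  · exact ((hjoin (isFacet_lift hF) (hcapFacet _) (card_insert_apex hcap he)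
      hsubF (Finset.insert_subset_insert _ hcap)).trans
      (hjoin (hcapFacet _) (hcapFacet _) S.card_cap
        (Finset.subset_insert _ _) (Finset.subset_insert _ _))).trans
      (hjoin (hcapFacet _) (isFacet_lift hG) (card_insert_apex hcap he)
        (Finset.insert_subset_insert _ hcap) hsubG)
  · have hlink {F} (hF : K.IsFacet F) (huF : u ∈ F) : F.erase u ∈ K.linkTriangles u :=
      erase_mem_linkTriangles hF.1 (S.isNormalPseudomanifold.1.2 F hF) huF
    rw [side_eq_of_edge (hlink hF heF.1) (hlink hG heG.1) he
      (Finset.subset_erase.2 ⟨heF.2, hu⟩) (Finset.subset_erase.2 ⟨heG.2, hu⟩) hcap] at hsubF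
    refine hjoin (isFacet_lift hF) (isFacet_lift hG) ?_ hsubF hsubG
    rw [Finset.card_insert_of_notMem fun h => S.apex_notMem _ F hF.1 (heF.2 h), he]

lemma reflTransGen_lift (h : K.FacetAdj F G) :
    Relation.ReflTransGen S.splitting.FacetAdj (S.lift F) (S.lift G) := by
  obtain ⟨hF, hG, hFG⟩ := h
  have hcard : (F ∩ G).card = 3 := by
    have := S.isNormalPseudomanifold.1.2 F hF
    omega
  by_cases hu : u ∈ F ∩ G
  · refine reflTransGen_lift_of_insert_subset hF hG (e := (F ∩ G).erase u) ?_
      (Finset.notMem_erase u _) ?_ ?_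
    · rw [Finset.card_erase_of_mem hu, hcard]
    · rw [Finset.insert_erase hu]; exact Finset.inter_subset_left
    · rw [Finset.insert_erase hu]; exact Finset.inter_subset_right
  · have havoid (i) : S.apex i ∉ F ∩ G := fun hi =>
      S.apex_notMem i F hF.1 (Finset.mem_inter.1 hi).1
    refine S.isPure_splitting.reflTransGen_facetAdj (isFacet_lift hF) (isFacet_lift hG) hcard
      ?_ ?_ <;> rw [subset_lift_iff havoid, Finset.subset_erase]
    exacts [⟨Finset.inter_subset_left, hu⟩, ⟨Finset.inter_subset_right, hu⟩]

lemma exists_reflTransGen_lift (hs : S.splitting.IsFacet s) :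
    ∃ F, K.IsFacet F ∧ Relation.ReflTransGen S.splitting.FacetAdj s (S.lift F) ∧
      Relation.ReflTransGen S.splitting.FacetAdj (S.lift F) s := by
  rcases mem_splittingFacets.1 (isFacet_splitting_iff.1 hs) with h | ⟨i, rfl⟩
  · obtain ⟨F, hF, hcard, rfl⟩ := mem_liftFacets.1 h
    exact ⟨F, S.isNormalPseudomanifold.1.isFacet_iff.2 ⟨hF, hcard⟩, .refl, .refl⟩
  · obtain ⟨e, -, hecap, he⟩ := exists_edge_superset S.empty_ssubset_cap
    obtain ⟨T, hT, heT⟩ := mem_discFaces.1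
      (mem_discFaces_of_ssubset_cap (ssubset_cap_of_card_eq_two hecap he) i)
    obtain ⟨hTlink, rfl⟩ := mem_sideTriangles.1 hT
    obtain ⟨hTcard, huT, hins⟩ := mem_linkTriangles.1 hTlink
    have hF : K.IsFacet (insert u T) := S.isNormalPseudomanifold.1.isFacet_iff.2
      ⟨hins, by rw [Finset.card_insert_of_notMem huT, hTcard]⟩
    have hsub := insert_apex_subset_lift (S := S) hins (Finset.mem_insert_self u T)
      (fun h => huT (heT h)) (heT.trans (Finset.subset_insert u T))
    rw [Finset.erase_insert huT] at hsub
    have hcapsub := Finset.insert_subset_insert (S.apex (S.side T)) hecap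
    have hcard := card_insert_apex (i := S.side T) hecap he
    exact ⟨insert u T, hF,
      S.isPure_splitting.reflTransGen_facetAdj hs (isFacet_lift hF) hcard hcapsub hsub,
      S.isPure_splitting.reflTransGen_facetAdj (isFacet_lift hF) hs hcard hsub hcapsub⟩

variable (S) in
lemma stronglyConnected_splitting : S.splitting.StronglyConnected := by
  intro s t hs ht
  obtain ⟨F, hF, hsF, -⟩ := exists_reflTransGen_lift hs
  obtain ⟨G, hG, -, hGt⟩ := exists_reflTransGen_lift ht
  have hFG := (S.isNormalPseudomanifold.2.1 F G hF hG).lift' S.lift fun _ _ => reflTransGen_lift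
  exact (hsF.trans hFG).trans hGt

end StronglyConnected

section Links

lemma vertAdj_apex_iff (hx : ∀ i, S.apex i ∉ insert x s) :
    (S.splitting.lk s).VertAdj x (S.apex i) ↔ x ∉ s ∧ insert x s ∈ S.cappedFaces i := by
  rw [vertAdj_lk_iff, Finset.insert_comm, insert_apex_mem_splitting (hx i)]
  exact ⟨fun h => ⟨h.1, h.2.2⟩, fun h => ⟨h.1, fun hi => hx i (Finset.mem_insert_of_mem hi), h.2⟩⟩

lemma reflTransGen_apex (hi : s ∈ S.discFaces i) (hj : s ∈ S.discFaces j) (hcard : s.card ≤ 2) :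
    Relation.ReflTransGen (S.splitting.lk s).VertAdj (S.apex i) (S.apex j) := by
  rcases eq_or_ne i j with rfl | hij
  · exact .refl
  have hs := subset_cap_of_mem_discFaces hij hi hj
  obtain ⟨q, hq, hqs⟩ := Finset.exists_mem_notMem_of_card_lt_card (s := s) (t := S.cap)
    (by rw [S.card_cap]; omega)
  have hqcap := Finset.insert_subset hq hs
  have hadj (k) : Relation.ReflTransGen (S.splitting.lk s).VertAdj q (S.apex k) :=
    .single <| (vertAdj_apex_iff fun l hl => apex_notMem_cap l (hqcap hl)).2
      ⟨hqs, mem_cappedFaces_of_subset_cap hqcap k⟩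
  exact (reflTransGen_vertAdj_symm (hadj i)).trans (hadj j)

/- A path in the link of `s` in `K` becomes a path in the link in the split complex when `u` is
replaced by a suitable apex. -/
lemma reflTransGen_update (hu : u ∉ s) (hcard : s.card ≤ 2)
    (hi : ∀ j, s ∈ S.discFaces j → s ∈ S.discFaces i) (h : (K.lk s).VertAdj x y) :
    Relation.ReflTransGen (S.splitting.lk s).VertAdj
      (Function.update id u (S.apex i) x) (Function.update id u (S.apex i) y) := by
  have hapex {y : ℕ} (hyu : y ≠ u) (h : (K.lk s).VertAdj u y) :
      Relation.ReflTransGen (S.splitting.lk s).VertAdj y (S.apex i) := by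
    obtain ⟨-, hys, hins⟩ := vertAdj_lk_iff.1 h
    obtain ⟨j, hj⟩ := exists_mem_discFaces (S := S) (t := insert y s)
      (by simp [Ne.symm hyu, hu]) hins
    have hsj := mem_discFaces_of_subset hj (Finset.subset_insert y s)
    exact .head ((vertAdj_apex_iff (apex_notMem_of_mem_discFaces hj)).2
      ⟨hys, mem_cappedFaces.2 (Or.inr hj)⟩) (reflTransGen_apex hsj (hi j hsj) hcard)
  rcases eq_or_ne x u with hx | hx <;> rcases eq_or_ne y u with hy | hy
  · rw [hx, hy]
  · rw [hx] at h ⊢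
    simpa [hy] using reflTransGen_vertAdj_symm (hapex hy h)
  · rw [hy] at h ⊢
    rw [VertAdj, Finset.pair_comm] at h
    simpa [hx] using hapex hx h
  · obtain ⟨hxs, hys, hins⟩ := vertAdj_lk_iff.1 h
    have hmem : insert x (insert y s) ∈ S.splitting.faces :=
      (mem_splitting_of_apex_notMem fun i => S.apex_notMem i _ hins).2
        (Or.inl ⟨hins, by simp [hx.symm, hy.symm, hu]⟩)
    simpa [hx, hy] using Relation.ReflTransGen.single (vertAdj_lk_iff.2 ⟨hxs, hys, hmem⟩)

lemma exists_reflTransGen_update (hs : s ∈ K.faces) (hu : u ∉ s) (hcard : s.card ≤ 2)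
    (hi : ∀ j, s ∈ S.discFaces j → s ∈ S.discFaces i) (hx : {x} ∈ (S.splitting.lk s).faces) :
    ∃ y, {y} ∈ (K.lk s).faces ∧ Relation.ReflTransGen (S.splitting.lk s).VertAdj x
      (Function.update id u (S.apex i) y) := by
  obtain ⟨hxs, hins⟩ := singleton_mem_lk_iff.1 hx
  have hulk {j} (hj : s ∈ S.discFaces j) : {u} ∈ (K.lk s).faces :=
    singleton_mem_lk_iff.2 ⟨hu, insert_mem_of_mem_discFaces hj⟩
  have havoid (j) := S.apex_notMem j s hs
  by_cases hxapex : ∃ j, x = S.apex j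
  · obtain ⟨j, rfl⟩ := hxapex
    have hj := mem_discFaces_of_card_le ((insert_apex_mem_splitting hxs).1 hins) hcard
    exact ⟨u, hulk hj, by simpa using reflTransGen_apex hj (hi j hj) hcard⟩
  have havoidx (j) : S.apex j ∉ insert x s := by
    have : S.apex j ≠ x := fun h => hxapex ⟨j, h.symm⟩
    simp [this, havoid]
  rcases (mem_splitting_of_apex_notMem havoidx).1 hins with ⟨hmem, hux⟩ | hcap
  · refine ⟨x, singleton_mem_lk_iff.2 ⟨hxs, hmem⟩, ?_⟩
    rw [Function.update_of_ne fun h => hux (by simp [h])]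
    exact .refl
  · have hdisc := mem_discFaces_of_ssubset_cap (hcap ▸ Finset.ssubset_insert hxs) i
    refine ⟨u, hulk hdisc, ?_⟩
    rw [Function.update_self]
    exact .single ((vertAdj_apex_iff havoidx).2 ⟨hxs, mem_cappedFaces.2 (Or.inl hcap)⟩)

lemma conn_lk_of_mem (hs : s ∈ K.faces) (hu : u ∉ s) (hcard : s.card ≤ 2) :
    (S.splitting.lk s).Conn := by
  obtain ⟨i, hi⟩ : ∃ i, ∀ j, s ∈ S.discFaces j → s ∈ S.discFaces i := by
    by_cases h : ∃ i, s ∈ S.discFaces i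
    · exact h.imp fun i hi _ _ => hi
    · exact ⟨true, fun j hj => absurd ⟨j, hj⟩ h⟩
  have hmem : s ∈ S.splitting.faces :=
    (mem_splitting_of_apex_notMem fun i => S.apex_notMem i s hs).2 (Or.inl ⟨hs, hu⟩)
  refine ⟨S.isPure_splitting.lk_faces_nonempty hmem (by omega), fun x y hx hy => ?_⟩
  obtain ⟨x', hx', hxx'⟩ := exists_reflTransGen_update hs hu hcard hi hx
  obtain ⟨y', hy', hyy'⟩ := exists_reflTransGen_update hs hu hcard hi hy
  have hwalk := ((S.isNormalPseudomanifold.2.2.2 s hs hcard).2 x' y' hx' hy').lift'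
    (Function.update id u (S.apex i)) fun _ _ => reflTransGen_update hu hcard hi
  exact (hxx'.trans hwalk).trans (reflTransGen_vertAdj_symm hyy')

lemma vertAdj_lk_insert_apex (hx : x ∉ t) (hy : y ∉ t)
    (h : insert x (insert y t) ∈ S.cappedFaces i) :
    (S.splitting.lk (insert (S.apex i) t)).VertAdj x y := by
  have hi := apex_notMem_of_mem_cappedFaces h i
  simp only [Finset.mem_insert, not_or] at hi
  refine vertAdj_lk_iff.2 ⟨by simp [hx, Ne.symm hi.1], by simp [hy, Ne.symm hi.2.1], ?_⟩
  rw [Finset.insert_comm y, Finset.insert_comm x, insert_apex_mem_splitting (by simp [hi])]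
  exact h

/- A path around the edge or triangle `insert u t` stays in the disc on side `i` until it meets the
circle. -/
lemma reflTransGen_or_exists_subset_cap (hx : x ∉ t)
    (hins : insert x t ∈ S.discFaces i)
    (h : Relation.ReflTransGen (K.lk (insert u t)).VertAdj x y) :
    Relation.ReflTransGen (S.splitting.lk (insert (S.apex i) t)).VertAdj x y ∨
      ∃ q ∉ t, insert q t ⊆ S.cap ∧
        Relation.ReflTransGen (S.splitting.lk (insert (S.apex i) t)).VertAdj x q := by
  induction h using Relation.ReflTransGen.head_induction_on with
  | refl => exact Or.inl .refl
  | @head x z hxz _ ih =>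
    by_cases hcap : insert x t ⊆ S.cap
    · exact Or.inr ⟨x, hx, hcap, .refl⟩
    obtain ⟨hxu, hzu, hxzu⟩ := vertAdj_lk_iff.1 hxz
    simp only [Finset.mem_insert, not_or] at hxu hzu
    have hut := notMem_of_mem_discFaces hins
    simp only [Finset.mem_insert, not_or] at hut
    have hmem : insert x (insert z t) ∈ S.discFaces i := by
      refine mem_discFaces_of_superset hins hcap
        (Finset.insert_subset_insert x (Finset.subset_insert z t)) ?_ ?_
      · simp [hut, Ne.symm hzu.1]
      · rwa [Finset.insert_comm u, Finset.insert_comm u]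
    have hadj := vertAdj_lk_insert_apex hx hzu.2 (mem_cappedFaces.2 (Or.inr hmem))
    exact (ih hzu.2 (mem_discFaces_of_subset hmem (Finset.subset_insert _ _))).imp
      (.head hadj) fun ⟨q, hq, hqcap, hzq⟩ => ⟨q, hq, hqcap, .head hadj hzq⟩

lemma singleton_mem_lk_of_insert_apex (ht : t ∈ S.discFaces i) (hcard : t.card ≤ 1)
    (hx : {x} ∈ (S.splitting.lk (insert (S.apex i) t)).faces) :
    x ∉ t ∧ insert x t ∈ S.discFaces i ∧ {x} ∈ (K.lk (insert u t)).faces := by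
  obtain ⟨hxi, hxt⟩ := singleton_mem_lk_iff.1 hx
  simp only [Finset.mem_insert, not_or] at hxi
  rw [Finset.insert_comm, insert_apex_mem_splitting
    (by simp [apex_notMem_of_mem_discFaces ht, Ne.symm hxi.1])] at hxt
  have hdisc := mem_discFaces_of_card_le hxt ((Finset.card_insert_le x t).trans (by omega))
  have hu := notMem_of_mem_discFaces hdisc
  simp only [Finset.mem_insert, not_or] at hu
  refine ⟨hxi.2, hdisc, singleton_mem_lk_iff.2 ⟨by simp [hxi.2, Ne.symm hu.1], ?_⟩⟩
  rw [Finset.insert_comm]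
  exact insert_mem_of_mem_discFaces hdisc

lemma conn_lk_insert_apex (ht : t ∈ S.discFaces i) (hcard : t.card ≤ 1) :
    (S.splitting.lk (insert (S.apex i) t)).Conn := by
  have hi := apex_notMem_of_mem_discFaces ht i
  have hmem : insert (S.apex i) t ∈ S.splitting.faces :=
    (insert_apex_mem_splitting hi).2 (mem_cappedFaces.2 (Or.inr ht))
  have hcardi := Finset.card_insert_of_notMem hi
  refine ⟨S.isPure_splitting.lk_faces_nonempty hmem (by omega), fun x y hx hy => ?_⟩
  obtain ⟨hxt, hxdisc, hxlk⟩ := singleton_mem_lk_of_insert_apex ht hcard hx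
  obtain ⟨hyt, hydisc, hylk⟩ := singleton_mem_lk_of_insert_apex ht hcard hy
  have hcardu := Finset.card_insert_le u t
  have hconn := (S.isNormalPseudomanifold.2.2.2 _ (insert_mem_of_mem_discFaces ht)
    (by omega)).2
  rcases reflTransGen_or_exists_subset_cap hxt hxdisc (hconn x y hxlk hylk)
    with hxy | ⟨q, hqt, hqcap, hxq⟩
  · exact hxy
  rcases reflTransGen_or_exists_subset_cap hyt hydisc (hconn y x hylk hxlk)
    with hyx | ⟨r, hrt, hrcap, hyr⟩
  · exact reflTransGen_vertAdj_symm hyx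
  have hqr := vertAdj_lk_insert_apex hqt hrt (i := i) <| mem_cappedFaces_of_subset_cap
    (Finset.insert_subset (hqcap (Finset.mem_insert_self q t)) hrcap) i
  exact (hxq.tail hqr).trans (reflTransGen_vertAdj_symm hyr)

end Links

variable (S) in
theorem isNormalPseudomanifold_splitting : S.splitting.IsNormalPseudomanifold 3 := by
  refine ⟨S.isPure_splitting, S.stronglyConnected_splitting,
    fun s => card_facets_splitting_superset, fun s hs hcard => ?_⟩
  rcases mem_splitting_iff.1 hs with (⟨hs, hu⟩ | rfl) | ⟨i, t, ht, rfl⟩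
  · exact conn_lk_of_mem hs hu hcard
  · exact absurd hcard (by rw [S.card_cap]; norm_num)
  · rw [Finset.card_insert_of_notMem (apex_notMem_of_mem_cappedFaces ht i)] at hcard
    exact conn_lk_insert_apex (mem_discFaces_of_card_le ht (by omega)) (by omega)

section Counting

variable (S) in
/-- The faces with `k` vertices of the disc on side `i`. -/
def discFacesOfCard (k : ℕ) (i : Bool) : Finset (Finset ℕ) := {t ∈ S.discFaces i | t.card = k}

lemma discFacesOfCard_inter (hk : k ≤ 2) :
    S.discFacesOfCard k true ∩ S.discFacesOfCard k false = S.cap.powersetCard k := by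
  ext t
  simp only [discFacesOfCard, Finset.mem_inter, Finset.mem_filter, Finset.mem_powersetCard]
  refine ⟨fun ⟨ht, hf⟩ => ⟨subset_cap_of_mem_discFaces (by simp) ht.1 hf.1, ht.2⟩,
    fun ⟨ht, hcard⟩ => ?_⟩
  have hss : t ⊂ S.cap := ht.ssubset_of_ne fun h => by
    rw [h, S.card_cap] at hcard
    omega
  exact ⟨⟨mem_discFaces_of_ssubset_cap hss true, hcard⟩,
    mem_discFaces_of_ssubset_cap hss false, hcard⟩

lemma mem_discFacesOfCard_union :
    t ∈ S.discFacesOfCard k true ∪ S.discFacesOfCard k false ↔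
      t.card = k ∧ u ∉ t ∧ insert u t ∈ K.faces := by
  have hdisc : (∃ i, t ∈ S.discFaces i) ↔ u ∉ t ∧ insert u t ∈ K.faces :=
    ⟨fun ⟨_, h⟩ => ⟨notMem_of_mem_discFaces h, insert_mem_of_mem_discFaces h⟩,
      fun h => exists_mem_discFaces h.1 h.2⟩
  simp only [discFacesOfCard, Finset.mem_union, Finset.mem_filter, ← hdisc, Bool.exists_bool]
  tauto

lemma mem_discFacesOfCard (hk : k ≤ 2) : t ∈ S.discFacesOfCard k i ↔
    t.card = k ∧ S.apex i ∉ t ∧ insert (S.apex i) t ∈ S.splitting.faces := by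
  rw [discFacesOfCard, Finset.mem_filter]
  constructor
  · rintro ⟨ht, hcard⟩
    have hi := apex_notMem_of_mem_discFaces ht i
    exact ⟨hcard, hi, (insert_apex_mem_splitting hi).2 (mem_cappedFaces.2 (Or.inr ht))⟩
  · rintro ⟨hcard, hi, ht⟩
    exact ⟨mem_discFaces_of_card_le ((insert_apex_mem_splitting hi).1 ht) (by omega), hcard⟩

lemma filter_apex_notMem_splitting (hk : k ≤ 1) :
    {s ∈ S.splitting.faces | s.card = k + 1 ∧ ∀ i, S.apex i ∉ s} =
      {s ∈ K.faces | s.card = k + 1 ∧ u ∉ s} := by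
  ext s
  simp only [Finset.mem_filter]
  constructor
  · rintro ⟨hs, hcard, hi⟩
    rcases (mem_splitting_of_apex_notMem hi).1 hs with h | rfl
    · exact ⟨h.1, hcard, h.2⟩
    · rw [S.card_cap] at hcard
      omega
  · rintro ⟨hs, hcard, hu⟩
    have hi := fun i => S.apex_notMem i s hs
    exact ⟨(mem_splitting_of_apex_notMem hi).2 (Or.inl ⟨hs, hu⟩), hcard, hi⟩

lemma fnum_splitting_eq_add (hk : k ≤ 1) : S.splitting.fnum k =
    ({s ∈ K.faces | s.card = k + 1 ∧ u ∉ s}).card + ∑ i, (S.discFacesOfCard k i).card := by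
  have hunion : {s ∈ S.splitting.faces | s.card = k + 1 ∧ ¬ ∀ i, S.apex i ∉ s} =
      Finset.univ.biUnion fun i => {s ∈ S.splitting.faces | s.card = k + 1 ∧ S.apex i ∈ s} := by
    ext s
    simp only [Finset.mem_filter, Finset.mem_biUnion, Finset.mem_univ, true_and, not_forall,
      not_not, exists_and_left]
  have hdisj : ((Finset.univ : Finset Bool) : Set Bool).PairwiseDisjoint
      fun i => {s ∈ S.splitting.faces | s.card = k + 1 ∧ S.apex i ∈ s} := by
    refine fun i _ j _ hij => Finset.disjoint_left.2 fun s hi hj => hij ?_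
    rw [Finset.mem_filter] at hi hj
    exact eq_of_apex_mem_splitting hi.1 hi.2.2 hj.2.2
  rw [fnum, ← Finset.card_filter_add_card_filter_not (fun s => ∀ i, S.apex i ∉ s),
    Finset.filter_filter, Finset.filter_filter, filter_apex_notMem_splitting hk, hunion,
    Finset.card_biUnion hdisj]
  congr 1
  exact Finset.sum_congr rfl fun i _ => card_faces_mem fun _ => mem_discFacesOfCard (by omega)

/- The faces of the boundary circle of the two discs are counted twice in the split complex. -/
lemma fnum_splitting (hk : k ≤ 1) : S.splitting.fnum k = K.fnum k + Nat.choose 3 k := by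
  rw [fnum_splitting_eq_add hk, fnum_eq_card_add_card fun _ => mem_discFacesOfCard_union (S := S),
    Fintype.sum_bool, add_assoc, ← Finset.card_union_add_card_inter,
    discFacesOfCard_inter (by omega), Finset.card_powersetCard, S.card_cap]

variable (S) in
theorem g2_splitting : S.splitting.g2 = K.g2 - 1 := by
  simp only [g2, fnum_splitting le_rfl, fnum_splitting zero_le_one, Nat.choose_one_right,
    Nat.choose_zero_right]
  push_cast
  ring

end Counting

end VertexSplitting

section MissingTriangle

variable {K : SComplex} {u : ℕ} {Q t : Finset ℕ}

/-- No expansion of an edge of `K` followed by a bistellar 2-move produces a normal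
3-pseudomanifold with smaller `g₂`. -/
def ExpansionMinimal (K : SComplex) : Prop :=
  ∀ M K' : SComplex, K'.IsNormalPseudomanifold 3 → EdgeContraction M K → BistellarTwoMove M K' →
    K.g2 ≤ K'.g2

lemma ExpansionMinimal.isEmpty_vertexSplitting (hmin : K.ExpansionMinimal) :
    IsEmpty (VertexSplitting K u) :=
  ⟨fun S => by
    have hle := hmin S.expansion S.splitting S.isNormalPseudomanifold_splitting
      S.edgeContraction_expansion S.bistellarTwoMove_splitting
    rw [S.g2_splitting] at hle
    omega⟩

lemma exists_injective_notMem_faces (K : SComplex) :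
    ∃ apex : Bool → ℕ, Function.Injective apex ∧ ∀ i, ∀ s ∈ K.faces, apex i ∉ s := by
  obtain ⟨x, hx⟩ := Infinite.exists_notMem_finset K.vertexSet
  obtain ⟨y, hy⟩ := Infinite.exists_notMem_finset (insert x K.vertexSet)
  rw [Finset.mem_insert, not_or] at hy
  refine ⟨fun i => bif i then x else y, ?_, ?_⟩
  · simp [Function.Injective, hy.1, Ne.symm hy.1]
  · rintro (_ | _) s hs h
    exacts [hy.2 (subset_vertexSet hs h), hx (subset_vertexSet hs h)]

lemma insert_mem_of_ssubset (hcard : Q.card = 3)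
    (hedges : ∀ e ∈ Q.powersetCard 2, e ∈ (K.lk {u}).faces) (ht : t ⊂ Q) :
    insert u t ∈ K.faces := by
  have hlt := Finset.card_lt_card ht
  obtain ⟨e, hte, heQ, he⟩ := Finset.exists_subsuperset_card_eq ht.subset
    (show t.card ≤ 2 by omega) (by omega)
  exact insert_mem_faces_of_subset
    (mem_lk_singleton.1 (hedges e (Finset.mem_powersetCard.2 ⟨heQ, he⟩))).2.2 hte

lemma notMem_of_edges_mem_lk (hcard : Q.card = 3)
    (hedges : ∀ e ∈ Q.powersetCard 2, e ∈ (K.lk {u}).faces) : u ∉ Q := by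
  intro hu
  obtain ⟨e, hue, heQ, he⟩ := Finset.exists_subsuperset_card_eq (s := {u}) (t := Q) (n := 2)
    (by simpa using hu) (by simp) (by omega)
  exact (mem_lk_singleton.1 (hedges e (Finset.mem_powersetCard.2 ⟨heQ, he⟩))).2.1 (hue (by simp))

lemma notMem_faces_of_notMem_lk
    (hK : ∀ s : Finset ℕ, s.card = 4 → (∀ t ∈ properFaces s, t ∈ K.faces) → s ∈ K.faces)
    (hcard : Q.card = 3) (hedges : ∀ e ∈ Q.powersetCard 2, e ∈ (K.lk {u}).faces)
    (hQ : Q ∉ (K.lk {u}).faces) : Q ∉ K.faces := by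
  intro hQK
  have hu := notMem_of_edges_mem_lk hcard hedges
  refine hQ (mem_lk_singleton.2 ⟨ne_empty_of_mem_faces hQK, hu, hK _ ?_ fun t ht => ?_⟩)
  · rw [Finset.card_insert_of_notMem hu, hcard]
  rw [mem_properFaces] at ht
  by_cases hut : u ∈ t
  · rw [← Finset.insert_erase hut]
    refine insert_mem_of_ssubset hcard hedges (Finset.ssubset_iff_subset_ne.2 ⟨?_, fun h => ?_⟩)
    · exact Finset.subset_insert_iff.1 ht.2.subset
    · exact ht.2.ne (by rw [← h, Finset.insert_erase hut])
  · exact K.down_closed Q hQK t ((Finset.subset_insert_iff_of_notMem hut).1 ht.2.subset) ht.1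

/- A mod 2 sum of triangles with boundary `∂Q` consists of the triangles on one side of `∂Q`. -/
lemma exists_side (hK : K.IsNormalPseudomanifold 3) (hL : (K.lk {u}).HasTrivialH1 (ZMod 2))
    (hcard : Q.card = 3) (hedges : ∀ e ∈ Q.powersetCard 2, e ∈ (K.lk {u}).faces) :
    ∃ side : Finset ℕ → Bool, ∀ T₁ ∈ K.linkTriangles u, ∀ T₂ ∈ K.linkTriangles u,
      ∀ e : Finset ℕ, T₁ ≠ T₂ → e.card = 2 → e ⊆ T₁ → e ⊆ T₂ →
        (side T₁ = side T₂ ↔ ¬ e ⊆ Q) := by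
  obtain ⟨c, hc⟩ := hL.exists_sum_eq hcard hedges
  refine ⟨fun T => decide (c T = 1), fun T₁ h₁ T₂ h₂ e hne he he₁ he₂ => ?_⟩
  obtain ⟨-, hu, hins⟩ := mem_linkTriangles.1 h₁
  have hpair : ({T ∈ (K.lk {u}).faces | T.card = 3 ∧ e ⊆ T}) = {T₁, T₂} := by
    rw [← Finset.filter_filter]
    refine (Finset.eq_of_subset_of_card_le ?_ ?_).symm
    · simp only [Finset.insert_subset_iff, Finset.singleton_subset_iff, Finset.mem_filter]
      exact ⟨⟨Finset.mem_filter.1 h₁, he₁⟩, Finset.mem_filter.1 h₂, he₂⟩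
    · rw [Finset.card_pair hne]
      exact (hK.card_linkTriangles_superset he (fun h => hu (he₁ h))
        (insert_mem_faces_of_subset hins he₁)).le
  have hsum := hc e he
  rw [hpair, Finset.sum_pair hne] at hsum
  have hside : ∀ x y : ZMod 2, x + y = (if e ⊆ Q then 1 else 0) →
      (decide (x = 1) = decide (y = 1) ↔ ¬ e ⊆ Q) := by
    split_ifs with h <;> simp only [h] <;> decide
  exact hside _ _ hsum

theorem mem_lk_of_edges_mem_lk (hK : K.IsNormalPseudomanifold 3)
    (htet : ∀ s : Finset ℕ, s.card = 4 → (∀ t ∈ properFaces s, t ∈ K.faces) → s ∈ K.faces)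
    (hmin : K.ExpansionMinimal) (hL : (K.lk {u}).HasTrivialH1 (ZMod 2)) (hcard : Q.card = 3)
    (hedges : ∀ e ∈ Q.powersetCard 2, e ∈ (K.lk {u}).faces) : Q ∈ (K.lk {u}).faces := by
  by_contra hQ
  obtain ⟨apex, hinj, hapex⟩ := exists_injective_notMem_faces K
  obtain ⟨side, hside⟩ := exists_side hK hL hcard hedges
  exact (hmin.isEmpty_vertexSplitting (u := u)).false
    { isNormalPseudomanifold := hK
      cap := Q
      side := side
      apex := apex
      card_cap := hcard
      notMem_cap := notMem_of_edges_mem_lk hcard hedges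
      cap_notMem := notMem_faces_of_notMem_lk htet hcard hedges hQ
      insert_mem_of_ssubset_cap := fun _ => insert_mem_of_ssubset hcard hedges
      side_eq_iff := hside
      apex_injective := hinj
      apex_notMem := hapex }

end MissingTriangle

lemma eq_pair_of_mem_powersetCard_two {a b c : ℕ} {e : Finset ℕ}
    (he : e ∈ ({a, b, c} : Finset ℕ).powersetCard 2) : e = {a, b} ∨ e = {b, c} ∨ e = {a, c} := by
  obtain ⟨hsub, hcard⟩ := Finset.mem_powersetCard.1 he
  obtain ⟨x, y, hxy, rfl⟩ := Finset.card_eq_two.1 hcard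
  simp only [Finset.insert_subset_iff, Finset.singleton_subset_iff, Finset.mem_insert,
    Finset.mem_singleton] at hsub
  rcases hsub with ⟨rfl | rfl | rfl, rfl | rfl | rfl⟩ <;> simp_all [Finset.pair_comm]

theorem statement4_general (K : SComplex) (u : ℕ) (hK : K.IsNormalPseudomanifold 3)
    (htet : ∀ s : Finset ℕ, s.card = 4 → (∀ t ∈ properFaces s, t ∈ K.faces) → s ∈ K.faces)
    (hmin : K.ExpansionMinimal) (hL : (K.lk {u}).HasTrivialH1 (ZMod 2)) :
    (∀ a b c : ℕ, a ≠ b → b ≠ c → a ≠ c →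
      ({a, b} : Finset ℕ) ∈ (K.lk {u}).faces →
      ({b, c} : Finset ℕ) ∈ (K.lk {u}).faces →
      ({a, c} : Finset ℕ) ∈ (K.lk {u}).faces →
      ({a, b, c} : Finset ℕ) ∈ (K.lk {u}).faces) ∧
    (∀ v x y : ℕ, x ≠ y →
      ({x} : Finset ℕ) ∈ ((K.lk {u}).lk {v}).faces →
      ({y} : Finset ℕ) ∈ ((K.lk {u}).lk {v}).faces →
      ({x, y} : Finset ℕ) ∈ (K.lk {u}).faces →
      ({x, y} : Finset ℕ) ∈ ((K.lk {u}).lk {v}).faces) := by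
  have htriangle (a b c : ℕ) (hab : a ≠ b) (hbc : b ≠ c) (hac : a ≠ c)
      (hab' : {a, b} ∈ (K.lk {u}).faces) (hbc' : {b, c} ∈ (K.lk {u}).faces)
      (hac' : {a, c} ∈ (K.lk {u}).faces) : {a, b, c} ∈ (K.lk {u}).faces := by
    refine mem_lk_of_edges_mem_lk hK htet hmin hL
      (Finset.card_eq_three.2 ⟨a, b, c, hab, hac, hbc, rfl⟩) fun e he => ?_
    rcases eq_pair_of_mem_powersetCard_two he with rfl | rfl | rfl
    exacts [hab', hbc', hac']
  refine ⟨htriangle, fun v x y hxy hx hy hedge => ?_⟩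
  obtain ⟨-, hvx, hx⟩ := mem_lk_singleton.1 hx
  obtain ⟨-, hvy, hy⟩ := mem_lk_singleton.1 hy
  rw [Finset.mem_singleton] at hvx hvy
  exact mem_lk_singleton.2
    ⟨Finset.insert_ne_empty _ _, by simp [hvx, hvy], htriangle v x y hvx hxy hvy hx hedge hy⟩

/-- Lemma 3.3: in the class `R`, the link of a non-singular vertex contains every
missing triangle whose boundary it contains; consequently for every vertex `v` of
`lk(u)` the disc `lk(u) − st(v, lk(u))` contains no diagonal (an interior edge
joining two boundary vertices). -/
theorem statement4 (K : SComplex) (u : ℕ) (hK : InClassR K)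
    (hu : ({u} : Finset ℕ) ∈ K.faces) (huns : K.HasSphereLink 3 u) :
    (∀ a b c : ℕ, a ≠ b → b ≠ c → a ≠ c →
      ({a, b} : Finset ℕ) ∈ (K.lk {u}).faces →
      ({b, c} : Finset ℕ) ∈ (K.lk {u}).faces →
      ({a, c} : Finset ℕ) ∈ (K.lk {u}).faces →
      ({a, b, c} : Finset ℕ) ∈ (K.lk {u}).faces) ∧
    (∀ v x y : ℕ, ({v} : Finset ℕ) ∈ (K.lk {u}).faces → x ≠ y →
      ({x} : Finset ℕ) ∈ ((K.lk {u}).lk {v}).faces →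
      ({y} : Finset ℕ) ∈ ((K.lk {u}).lk {v}).faces →
      ({x, y} : Finset ℕ) ∈ (K.lk {u}).faces →
      ({x, y} : Finset ℕ) ∈ ((K.lk {u}).lk {v}).faces) := by
  have hmain := statement4_general K u hK.1 hK.2.2.2.1
    (fun M K' hK' hM hK'M => hK.2.2.2.2 K' hK' (Or.inr (Or.inr (Or.inl ⟨M, hM, hK'M⟩))))
    (huns.hasTrivialH1 (by norm_num))
  exact ⟨hmain.1, fun v x y _ => hmain.2 v x y⟩

end SComplex
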